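/- arXiv:1212.0896 — 4 statements merged into one kernel-verified Lean document; each statement's English description precedes it below -/
import Mathlib

section
/- Suppose A is directed, i.e. e_j A e_i = 0 whenever j < i. Then for every i ∈ {1,…,n}: the subspace (1−e_i)Ae_i of Ae_i equals Σ_{l>i} A e_l A e_i, it is an A-submodule of Ae_i, and the standard module Δ_i = Ae_i/(Σ_{l>i} A e_l A e_i) is isomorphic as a left A-module to the corner algebra e_iAe_i equipped with the A-action a·m = (e_i a e_i)·m. In other words, every standard module of a directed algebra is the endomorphism algebra e_iAe_i of the corresponding object. -/
/-!
For `l ≠ i`, directedness kills one of the two factors of `e_i a e_l b e_i`: the right one if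
`l < i`, the left one if `i < l`. Inserting `1 = ∑ e_l` gives `e_i a b e_i = (e_i a e_i)(e_i b e_i)`
(`IsDirectedAlgebra.corner_mul`), so `a ↦ e_i a e_i` is a ring homomorphism `A → e_iAe_i`, and
`e_iAe_i` becomes an `A`-module through it.

The same decomposition shows that `Σ_{l>i} A e_l A e_i` consists of those `x ∈ Ae_i` with
`e_i x = 0` (`mem_stdTrace_iff`), which is `(1 - e_i)Ae_i`. Hence it is the kernel of the surjective
`A`-linear map `Ae_i → e_iAe_i`, `x ↦ e_i x e_i`, and the first isomorphism theorem identifies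
`Δ_i` with `e_iAe_i`.
-/

set_option linter.unusedVariables false
set_option maxHeartbeats 1000000

noncomputable section

/-! ### The corner ring `eAe` of a ring `A` at an idempotent `e` -/

variable {A : Type} [Ring A]

/-- The corner ring `eAe`, realized as `{x : A | e * x = x ∧ x * e = x}`. -/
def Corner (e : A) (_he : e * e = e) : Type := {x : A // e * x = x ∧ x * e = x}

namespace Corner

variable {e : A} {he : e * e = e}

instance : Zero (Corner e he) := ⟨⟨0, by simp, by simp⟩⟩
instance : Add (Corner e he) :=
  ⟨fun x y => ⟨x.1 + y.1, by rw [mul_add, x.2.1, y.2.1], by rw [add_mul, x.2.2, y.2.2]⟩⟩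
instance : Neg (Corner e he) :=
  ⟨fun x => ⟨-x.1, by rw [mul_neg, x.2.1], by rw [neg_mul, x.2.2]⟩⟩
instance : Mul (Corner e he) :=
  ⟨fun x y => ⟨x.1 * y.1, by rw [← mul_assoc, x.2.1], by rw [mul_assoc, y.2.2]⟩⟩
instance : One (Corner e he) := ⟨⟨e, he, he⟩⟩

instance : AddCommGroup (Corner e he) where
  add_assoc a b c := Subtype.ext (add_assoc _ _ _)
  zero_add a := Subtype.ext (zero_add _)
  add_zero a := Subtype.ext (add_zero _)
  add_comm a b := Subtype.ext (add_comm _ _)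
  neg_add_cancel a := Subtype.ext (neg_add_cancel _)
  nsmul := nsmulRec
  zsmul := zsmulRec

instance instRing : Ring (Corner e he) :=
  { (inferInstance : AddCommGroup (Corner e he)) with
    mul := (· * ·)
    one := 1
    mul_assoc := fun a b c => Subtype.ext (mul_assoc _ _ _)
    one_mul := fun a => Subtype.ext a.2.1
    mul_one := fun a => Subtype.ext a.2.2
    left_distrib := fun a b c => Subtype.ext (left_distrib _ _ _)
    right_distrib := fun a b c => Subtype.ext (right_distrib _ _ _)
    zero_mul := fun a => Subtype.ext (zero_mul _)
    mul_zero := fun a => Subtype.ext (mul_zero _) }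

section Scalars

variable {k : Type} [CommRing k] [Algebra k A]

instance : SMul k (Corner e he) :=
  ⟨fun c x => ⟨c • x.1, by rw [mul_smul_comm, x.2.1], by rw [smul_mul_assoc, x.2.2]⟩⟩

instance instModulek : Module k (Corner e he) where
  one_smul x := Subtype.ext (one_smul k x.1)
  mul_smul c d x := Subtype.ext (mul_smul c d x.1)
  smul_zero c := Subtype.ext (smul_zero c)
  smul_add c x y := Subtype.ext (smul_add c x.1 y.1)
  add_smul c d x := Subtype.ext (add_smul c d x.1)
  zero_smul x := Subtype.ext (zero_smul k x.1)

instance instAlgebrak : Algebra k (Corner e he) :=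
  Algebra.ofModule (fun c x y => Subtype.ext (smul_mul_assoc c x.1 y.1))
    (fun c x y => Subtype.ext (mul_smul_comm c x.1 y.1))

end Scalars

end Corner

/-- For a left `A`-module `M`, the subset `eM = {m | e • m = m}`, as a module over the
corner ring `eAe`. -/
def CornerMod (e : A) (_he : e * e = e) (M : Type) [AddCommGroup M] [Module A M] : Type :=
  {m : M // e • m = m}

namespace CornerMod

variable {e : A} {he : e * e = e} {M : Type} [AddCommGroup M] [Module A M]

instance : Zero (CornerMod e he M) := ⟨⟨0, by simp⟩⟩
instance : Add (CornerMod e he M) :=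
  ⟨fun x y => ⟨x.1 + y.1, by rw [smul_add, x.2, y.2]⟩⟩
instance : Neg (CornerMod e he M) := ⟨fun x => ⟨-x.1, by rw [smul_neg, x.2]⟩⟩

instance : AddCommGroup (CornerMod e he M) where
  add_assoc a b c := Subtype.ext (add_assoc _ _ _)
  zero_add a := Subtype.ext (zero_add _)
  add_zero a := Subtype.ext (add_zero _)
  add_comm a b := Subtype.ext (add_comm _ _)
  neg_add_cancel a := Subtype.ext (neg_add_cancel _)
  nsmul := nsmulRec
  zsmul := zsmulRec

instance : SMul (Corner e he) (CornerMod e he M) :=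
  ⟨fun c m => ⟨c.1 • m.1, by rw [smul_smul, c.2.1]⟩⟩

instance instModule : Module (Corner e he) (CornerMod e he M) where
  one_smul m := Subtype.ext m.2
  mul_smul x y m := Subtype.ext (mul_smul x.1 y.1 m.1)
  smul_zero x := Subtype.ext (smul_zero x.1)
  smul_add x m m' := Subtype.ext (smul_add x.1 m.1 m'.1)
  add_smul x y m := Subtype.ext (add_smul x.1 y.1 m.1)
  zero_smul m := Subtype.ext (zero_smul A m.1)

end CornerMod

/-- The space `eAf = {x : A | e * x = x ∧ x * f = x}`, a left `eAe`-module and a right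
`fAf`-module. -/
def Sandwich (e f : A) : Type := {x : A // e * x = x ∧ x * f = x}

namespace Sandwich

variable {e f : A} {he : e * e = e} {hf : f * f = f}

instance : Zero (Sandwich e f) := ⟨⟨0, by simp, by simp⟩⟩
instance : Add (Sandwich e f) :=
  ⟨fun x y => ⟨x.1 + y.1, by rw [mul_add, x.2.1, y.2.1], by rw [add_mul, x.2.2, y.2.2]⟩⟩
instance : Neg (Sandwich e f) :=
  ⟨fun x => ⟨-x.1, by rw [mul_neg, x.2.1], by rw [neg_mul, x.2.2]⟩⟩

instance : AddCommGroup (Sandwich e f) where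
  add_assoc a b c := Subtype.ext (add_assoc _ _ _)
  zero_add a := Subtype.ext (zero_add _)
  add_zero a := Subtype.ext (add_zero _)
  add_comm a b := Subtype.ext (add_comm _ _)
  neg_add_cancel a := Subtype.ext (neg_add_cancel _)
  nsmul := nsmulRec
  zsmul := zsmulRec

/-- Left action of the corner ring `eAe` on `eAf`. -/
instance : SMul (Corner e he) (Sandwich e f) :=
  ⟨fun c x => ⟨c.1 * x.1, by rw [← mul_assoc, c.2.1], by rw [mul_assoc, x.2.2]⟩⟩

instance instModuleLeft : Module (Corner e he) (Sandwich e f) where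
  one_smul x := Subtype.ext x.2.1
  mul_smul c d x := Subtype.ext (mul_assoc _ _ _)
  smul_zero c := Subtype.ext (mul_zero _)
  smul_add c x y := Subtype.ext (mul_add _ _ _)
  add_smul c d x := Subtype.ext (add_mul _ _ _)
  zero_smul x := Subtype.ext (zero_mul _)

/-- Right action of the corner ring `fAf` on `eAf`, as a left action of the opposite ring. -/
instance : SMul (Corner f hf)ᵐᵒᵖ (Sandwich e f) :=
  ⟨fun c x => ⟨x.1 * c.unop.1, by rw [← mul_assoc, x.2.1], by rw [mul_assoc, c.unop.2.2]⟩⟩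

instance instModuleRight : Module (Corner f hf)ᵐᵒᵖ (Sandwich e f) where
  one_smul x := Subtype.ext x.2.2
  mul_smul c d x := Subtype.ext (mul_assoc _ _ _).symm
  smul_zero c := Subtype.ext (zero_mul _)
  smul_add c x y := Subtype.ext (add_mul _ _ _)
  add_smul c d x := Subtype.ext (mul_add _ _ _)
  zero_smul x := Subtype.ext (mul_zero _)

end Sandwich

/-- The element `e * a * e` of the corner ring `eAe`. -/
def cornEl {e : A} (he : e * e = e) (a : A) : Corner e he :=
  ⟨e * a * e, by conv_lhs => rw [← mul_assoc, ← mul_assoc, he], by rw [mul_assoc, he]⟩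
def LIdeal (e : A) : Type := {x : A // x * e = x}
namespace LIdeal
variable {e : A}
instance : Zero (LIdeal e) := ⟨⟨0, by simp⟩⟩
instance : Add (LIdeal e) := ⟨fun x y => ⟨x.1 + y.1, by rw [add_mul, x.2, y.2]⟩⟩
instance : Neg (LIdeal e) := ⟨fun x => ⟨-x.1, by rw [neg_mul, x.2]⟩⟩
instance : AddCommGroup (LIdeal e) where
  add_assoc a b c := Subtype.ext (add_assoc _ _ _)
  zero_add a := Subtype.ext (zero_add _)
  add_zero a := Subtype.ext (add_zero _)
  add_comm a b := Subtype.ext (add_comm _ _)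
  neg_add_cancel a := Subtype.ext (neg_add_cancel _)
  nsmul := nsmulRec
  zsmul := zsmulRec
instance : SMul A (LIdeal e) := ⟨fun a x => ⟨a * x.1, by rw [mul_assoc, x.2]⟩⟩
instance instModuleA : Module A (LIdeal e) where
  one_smul x := Subtype.ext (one_mul _)
  mul_smul a b x := Subtype.ext (mul_assoc _ _ _)
  smul_zero a := Subtype.ext (mul_zero _)
  smul_add a x y := Subtype.ext (mul_add _ _ _)
  add_smul a b x := Subtype.ext (add_mul _ _ _)
  zero_smul x := Subtype.ext (zero_mul _)
section Scalars
variable {k : Type} [CommRing k] [Algebra k A]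
instance : SMul k (LIdeal e) := ⟨fun c x => ⟨c • x.1, by rw [smul_mul_assoc, x.2]⟩⟩
instance instModulek : Module k (LIdeal e) where
  one_smul x := Subtype.ext (one_smul k x.1)
  mul_smul c d x := Subtype.ext (mul_smul c d x.1)
  smul_zero c := Subtype.ext (smul_zero c)
  smul_add c x y := Subtype.ext (smul_add c x.1 y.1)
  add_smul c d x := Subtype.ext (add_smul c d x.1)
  zero_smul x := Subtype.ext (zero_smul k x.1)
end Scalars
end LIdeal

def RIdeal (f : A) : Type := {x : A // f * x = x}
namespace RIdeal
variable {f : A}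
instance : Zero (RIdeal f) := ⟨⟨0, by simp⟩⟩
instance : Add (RIdeal f) := ⟨fun x y => ⟨x.1 + y.1, by rw [mul_add, x.2, y.2]⟩⟩
instance : Neg (RIdeal f) := ⟨fun x => ⟨-x.1, by rw [mul_neg, x.2]⟩⟩
instance : AddCommGroup (RIdeal f) where
  add_assoc a b c := Subtype.ext (add_assoc _ _ _)
  zero_add a := Subtype.ext (zero_add _)
  add_zero a := Subtype.ext (add_zero _)
  add_comm a b := Subtype.ext (add_comm _ _)
  neg_add_cancel a := Subtype.ext (neg_add_cancel _)
  nsmul := nsmulRec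
  zsmul := zsmulRec
section Scalars
variable {k : Type} [CommRing k] [Algebra k A]
instance : SMul k (RIdeal f) := ⟨fun c x => ⟨c • x.1, by rw [mul_smul_comm, x.2]⟩⟩
instance instModulek : Module k (RIdeal f) where
  one_smul x := Subtype.ext (one_smul k x.1)
  mul_smul c d x := Subtype.ext (mul_smul c d x.1)
  smul_zero c := Subtype.ext (smul_zero c)
  smul_add c x y := Subtype.ext (smul_add c x.1 y.1)
  add_smul c d x := Subtype.ext (add_smul c d x.1)
  zero_smul x := Subtype.ext (zero_smul k x.1)
end Scalars
end RIdeal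

section Duals
variable (k : Type) [CommRing k] {A : Type} [Ring A] [Algebra k A]

/-- Right multiplication by `a : A` on the right ideal `fA`, as a `k`-linear map. -/
def rmulR {f : A} (a : A) : RIdeal (A := A) f →ₗ[k] RIdeal (A := A) f where
  toFun m := ⟨m.1 * a, by rw [← mul_assoc, m.2]⟩
  map_add' x y := Subtype.ext (add_mul _ _ _)
  map_smul' c x := Subtype.ext (smul_mul_assoc _ _ _)

/-- Left multiplication by `b : A` on the left ideal `Ae`, as a `k`-linear map. -/
def lmulL {e : A} (b : A) : LIdeal (A := A) e →ₗ[k] LIdeal (A := A) e where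
  toFun m := ⟨b * m.1, by rw [mul_assoc, m.2]⟩
  map_add' x y := Subtype.ext (mul_add _ _ _)
  map_smul' c x := Subtype.ext (mul_smul_comm _ _ _)

variable {f e : A}

/-- `D(fA) = Hom_k(fA, k)` is a left `A`-module via `(a • φ) m = φ (m * a)`. -/
instance : SMul A (RIdeal (A := A) f →ₗ[k] k) := ⟨fun a φ => φ.comp (rmulR k a)⟩

instance DualRIdeal.instModuleA : Module A (RIdeal (A := A) f →ₗ[k] k) where
  one_smul φ := LinearMap.ext fun m => congrArg φ (Subtype.ext (mul_one m.1))
  mul_smul a b φ := LinearMap.ext fun m => congrArg φ (Subtype.ext (mul_assoc m.1 a b).symm)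
  smul_zero a := LinearMap.ext fun m => rfl
  smul_add a φ ψ := LinearMap.ext fun m => rfl
  add_smul a b φ := LinearMap.ext fun m => by
    have h : rmulR k (f := f) (a + b) m = rmulR k a m + rmulR k b m :=
      Subtype.ext (mul_add m.1 a b)
    show φ (rmulR k (a + b) m) = φ (rmulR k a m) + φ (rmulR k b m)
    rw [h, map_add]
  zero_smul φ := LinearMap.ext fun m => by
    have h : rmulR k (f := f) (0 : A) m = 0 := Subtype.ext (mul_zero m.1)
    show φ (rmulR k (0 : A) m) = 0
    rw [h, map_zero]

/-- `D(Ae) = Hom_k(Ae, k)` is a right `A`-module, i.e. a left `Aᵐᵒᵖ`-module, via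
`(φ • a) m = φ (a * m)`. -/
instance : SMul Aᵐᵒᵖ (LIdeal (A := A) e →ₗ[k] k) := ⟨fun a φ => φ.comp (lmulL k a.unop)⟩

instance DualLIdeal.instModuleAop : Module Aᵐᵒᵖ (LIdeal (A := A) e →ₗ[k] k) where
  one_smul φ := LinearMap.ext fun m => congrArg φ (Subtype.ext (one_mul m.1))
  mul_smul a b φ := LinearMap.ext fun m =>
    congrArg φ (Subtype.ext (mul_assoc b.unop a.unop m.1))
  smul_zero a := LinearMap.ext fun m => rfl
  smul_add a φ ψ := LinearMap.ext fun m => rfl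
  add_smul a b φ := LinearMap.ext fun m => by
    have h : lmulL k (e := e) ((a + b).unop) m = lmulL k a.unop m + lmulL k b.unop m :=
      Subtype.ext (add_mul a.unop b.unop m.1)
    show φ (lmulL k ((a + b).unop) m) = φ (lmulL k a.unop m) + φ (lmulL k b.unop m)
    rw [h, map_add]
  zero_smul φ := LinearMap.ext fun m => by
    have h : lmulL k (e := e) ((0 : Aᵐᵒᵖ).unop) m = 0 := Subtype.ext (zero_mul m.1)
    show φ (lmulL k ((0 : Aᵐᵒᵖ).unop) m) = 0
    rw [h, map_zero]

/-- Left multiplication by `a : A` on `A`, as a map of right `A`-modules. -/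
def lmulOp (a : A) : A →ₗ[Aᵐᵒᵖ] A where
  toFun x := a * x
  map_add' := mul_add a
  map_smul' b x := by
    simp only [MulOpposite.smul_eq_mul_unop, RingHom.id_apply, mul_assoc]

/-- `Hom_{Aᵒᵖ}(D(Ae), A)` is a left `A`-module via `(a • ψ) φ = a * ψ φ`. -/
instance : SMul A ((LIdeal (A := A) e →ₗ[k] k) →ₗ[Aᵐᵒᵖ] A) :=
  ⟨fun a ψ => (lmulOp a).comp ψ⟩

instance HomDualA.instModuleA : Module A ((LIdeal (A := A) e →ₗ[k] k) →ₗ[Aᵐᵒᵖ] A) where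
  one_smul ψ := LinearMap.ext fun φ => one_mul _
  mul_smul a b ψ := LinearMap.ext fun φ => mul_assoc _ _ _
  smul_zero a := LinearMap.ext fun φ => mul_zero _
  smul_add a ψ χ := LinearMap.ext fun φ => mul_add _ _ _
  add_smul a b ψ := LinearMap.ext fun φ => add_mul _ _ _
  zero_smul ψ := LinearMap.ext fun φ => zero_mul _

end Duals
/-! ### Stratification -/

section Strat

variable (A : Type) [Ring A] {n : ℕ} (e : Fin n → A)

/-- The left ideal `Ae_i`, as a submodule of the left regular module. -/
abbrev stdIdeal (i : Fin n) : Submodule A A := Submodule.span A {e i}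

/-- The left submodule `Σ_{l > i} A e_l A e_i` of `A`. -/
abbrev stdTrace (i : Fin n) : Submodule A A :=
  Submodule.span A {x : A | ∃ l : Fin n, i < l ∧ ∃ b : A, x = e l * b * e i}

/-- The standard module `Δ_i = Ae_i / (Σ_{l>i} A e_l A e_i)`. -/
abbrev StdMod (i : Fin n) :=
  ↥(stdIdeal A e i) ⧸ (Submodule.comap (stdIdeal A e i).subtype (stdTrace A e i))

/-- The submodule `Σ_{j ≥ i} A e_j (rad A) e_i` of `A`, where `rad A` is the Jacobson
radical of `A`. -/
abbrev properTrace (i : Fin n) : Submodule A A :=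
  Submodule.span A {x : A | ∃ j : Fin n, i ≤ j ∧
    ∃ r ∈ Ideal.jacobson (⊥ : Ideal A), x = e j * r * e i}

/-- The proper standard module `Δ̄_i = Ae_i / (Σ_{j ≥ i} A e_j (rad A) e_i)`. -/
abbrev PStdMod (i : Fin n) :=
  ↥(stdIdeal A e i) ⧸ (Submodule.comap (stdIdeal A e i).subtype (properTrace A e i))

/-- `M` admits a filtration `0 = M_0 ⊆ M_1 ⊆ ⋯ ⊆ M_r = M` whose successive quotients are
standard modules; i.e. `M ∈ F(Δ)`. -/
def HasStdFiltration (M : Type) [AddCommGroup M] [Module A M] : Prop :=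
  ∃ (r : ℕ) (F : Fin (r + 1) → Submodule A M), Monotone F ∧ F 0 = ⊥ ∧ F (Fin.last r) = ⊤ ∧
    ∀ t : Fin r, ∃ i : Fin n,
      Nonempty ((↥(F t.succ) ⧸ (Submodule.comap (F t.succ).subtype (F t.castSucc)))
        ≃ₗ[A] StdMod A e i)

/-- `M` admits a filtration `0 = M_0 ⊆ M_1 ⊆ ⋯ ⊆ M_r = M` whose successive quotients are
direct summands of standard modules. -/
def HasStdSummandFiltration (M : Type) [AddCommGroup M] [Module A M] : Prop :=
  ∃ (r : ℕ) (F : Fin (r + 1) → Submodule A M), Monotone F ∧ F 0 = ⊥ ∧ F (Fin.last r) = ⊤ ∧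
    ∀ t : Fin r, ∃ (i : Fin n) (p q : Submodule A (StdMod A e i)), IsCompl p q ∧
      Nonempty ((↥(F t.succ) ⧸ (Submodule.comap (F t.succ).subtype (F t.castSucc)))
        ≃ₗ[A] ↥p)

/-- The algebra `A` is directed with respect to the index order of the idempotents `e_i`:
`e_j A e_i = 0` whenever `j < i`. -/
def IsDirectedAlgebra : Prop := ∀ i j : Fin n, j < i → ∀ a : A, e j * a * e i = 0

end Strat

/-- `ProjDimLE A d M` : the left `A`-module `M` has projective dimension at most `d`,
i.e. admits a projective resolution of length at most `d`. -/
def ProjDimLE (A : Type) [Ring A] : ℕ → (M : Type) → [AddCommGroup M] → [Module A M] → Prop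
  | 0, M, _, _ => Module.Projective A M
  | (d + 1), M, _, _ => ∃ (P : Type) (_ : AddCommGroup P) (_ : Module A P)
      (f : P →ₗ[A] M), Module.Projective A P ∧ Function.Surjective f ∧
        ProjDimLE A d ↥(LinearMap.ker f)

/-- A nonzero module which is not the internal direct sum of two nonzero submodules. -/
def IsIndecModule (A : Type) [Ring A] (M : Type) [AddCommGroup M] [Module A M] : Prop :=
  Nontrivial M ∧ ∀ p q : Submodule A M, IsCompl p q → p = ⊥ ∨ q = ⊥

end

section DirectedCorner

variable {A : Type} [Ring A] {n : ℕ} {e : Fin n → A}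

/-- Compression to the corner `a ↦ e_i a e_i` is multiplicative on a directed algebra. -/
theorem IsDirectedAlgebra.corner_mul (hdir : IsDirectedAlgebra A e)
    (hidem : ∀ i, e i * e i = e i) (hsum : ∑ i, e i = 1) (i : Fin n) (a b : A) :
    e i * (a * b) * e i = (e i * a * e i) * (e i * b * e i) := by
  calc e i * (a * b) * e i = e i * a * (∑ l, e l) * (b * e i) := by
        rw [hsum]; noncomm_ring
    _ = ∑ l, e i * a * e l * (b * e i) := by rw [Finset.mul_sum, Finset.sum_mul]
    _ = e i * a * e i * (b * e i) := by
        refine Finset.sum_eq_single i (fun l _ hl => ?_) (fun h => absurd (Finset.mem_univ i) h)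
        rcases lt_or_gt_of_ne hl with h | h
        · rw [mul_assoc (e i * a), ← mul_assoc (e l), hdir i l h b, mul_zero]
        · rw [hdir l i h a, zero_mul]
    _ = (e i * a * e i) * (e i * b * e i) := by
        rw [mul_assoc (e i) b, ← mul_assoc (e i * a * e i) (e i), mul_assoc (e i * a) (e i) (e i),
          hidem]

theorem mem_stdIdeal_iff (hidem : ∀ i, e i * e i = e i) (i : Fin n) (x : A) :
    x ∈ stdIdeal A e i ↔ x * e i = x := by
  rw [Submodule.mem_span_singleton]
  constructor
  · rintro ⟨a, rfl⟩
    rw [smul_eq_mul, mul_assoc, hidem]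
  · exact fun h => ⟨x, h⟩

/-- On a directed algebra, `Σ_{l>i} A e_l A e_i` is the set of `x ∈ Ae_i` killed by `e_i`. -/
theorem mem_stdTrace_iff (hidem : ∀ i, e i * e i = e i)
    (horth : ∀ i j, i ≠ j → e i * e j = 0) (hsum : ∑ i, e i = 1)
    (hdir : IsDirectedAlgebra A e) (i : Fin n) (x : A) :
    x ∈ stdTrace A e i ↔ x * e i = x ∧ e i * x = 0 := by
  constructor
  · intro hx
    induction hx using Submodule.span_induction with
    | mem x hx =>
      obtain ⟨l, hl, b, rfl⟩ := hx
      refine ⟨by rw [mul_assoc, hidem], ?_⟩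
      rw [← mul_assoc, ← mul_assoc, horth i l hl.ne, zero_mul, zero_mul]
    | zero => simp
    | add x y _ _ hx hy =>
      exact ⟨by rw [add_mul, hx.1, hy.1], by rw [mul_add, hx.2, hy.2, add_zero]⟩
    | smul a x _ hx =>
      refine ⟨by rw [smul_eq_mul, mul_assoc, hx.1], ?_⟩
      have h := hdir.corner_mul hidem hsum i a x
      rw [hx.2, zero_mul, mul_zero, mul_assoc, mul_assoc a, hx.1] at h
      exact h
  · rintro ⟨h1, h2⟩
    have hx : x = ∑ l, e l * x := by rw [← Finset.sum_mul, hsum, one_mul]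
    rw [hx]
    refine Submodule.sum_mem _ fun l _ => ?_
    have hl : e l * x = e l * x * e i := by rw [mul_assoc, h1]
    rcases lt_trichotomy l i with h | rfl | h
    · rw [hl, hdir i l h x]
      exact Submodule.zero_mem _
    · rw [h2]
      exact Submodule.zero_mem _
    · exact Submodule.subset_span ⟨l, h, x, hl⟩

/-- The left `A`-module structure `a • m = (e_i a e_i) * m` on the corner ring `e_iAe_i` of a
directed algebra. -/
abbrev cornerModule (hidem : ∀ i, e i * e i = e i) (hsum : ∑ i, e i = 1)
    (hdir : IsDirectedAlgebra A e) (i : Fin n) : Module A (Corner (e i) (hidem i)) where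
  smul a m := cornEl (hidem i) a * m
  one_smul m := Subtype.ext <| by
    change e i * 1 * e i * m.1 = m.1
    rw [mul_one, hidem, m.2.1]
  mul_smul a b m := Subtype.ext <| by
    change e i * (a * b) * e i * m.1 = e i * a * e i * (e i * b * e i * m.1)
    rw [hdir.corner_mul hidem hsum, mul_assoc]
  smul_zero a := mul_zero (cornEl (hidem i) a)
  smul_add a x y := mul_add (cornEl (hidem i) a) x y
  add_smul a b m := Subtype.ext <| by
    change e i * (a + b) * e i * m.1 = e i * a * e i * m.1 + e i * b * e i * m.1
    noncomm_ring
  zero_smul m := Subtype.ext <| by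
    change e i * 0 * e i * m.1 = 0
    simp

end DirectedCorner

/-- If `A` is directed (`e_j A e_i = 0` for `j < i`), then for every `i`:
the subspace `(1−e_i)Ae_i` of `Ae_i` equals `Σ_{l>i} A e_l A e_i`, this is an `A`-submodule of
`Ae_i`, and the standard module `Δ_i` is isomorphic, as a left `A`-module, to the corner algebra
`e_iAe_i` equipped with the `A`-action `a · m = (e_i a e_i) · m`. -/
theorem statement0
    (k : Type) [Field k] (A : Type) [Ring A] [Algebra k A] [FiniteDimensional k A]
    {n : ℕ} (e : Fin n → A)
    (hidem : ∀ i, e i * e i = e i)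
    (horth : ∀ i j, i ≠ j → e i * e j = 0)
    (hsum : ∑ i, e i = 1)
    (hdir : IsDirectedAlgebra A e) (i : Fin n) :
    ({x : A | ∃ a : A, x = (1 - e i) * a * e i} = (↑(stdTrace A e i) : Set A)) ∧
    stdTrace A e i ≤ stdIdeal A e i ∧
    ∃ φ : StdMod A e i ≃+ Corner (e i) (hidem i),
      ∀ (a : A) (m : StdMod A e i), φ (a • m) = cornEl (hidem i) a * φ m := by
  have htr := mem_stdTrace_iff hidem horth hsum hdir i
  refine ⟨?_, fun x hx => (mem_stdIdeal_iff hidem i x).2 ((htr x).1 hx).1, ?_⟩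
  · ext x
    rw [SetLike.mem_coe, htr]
    constructor
    · rintro ⟨a, rfl⟩
      refine ⟨by rw [mul_assoc, hidem], ?_⟩
      rw [← mul_assoc, ← mul_assoc, mul_sub, mul_one, hidem, sub_self, zero_mul, zero_mul]
    · rintro ⟨h1, h2⟩
      exact ⟨x, by rw [mul_assoc, h1, sub_mul, one_mul, h2, sub_zero]⟩
  · let _ : Module A (Corner (e i) (hidem i)) := cornerModule hidem hsum hdir i
    let ψ : ↥(stdIdeal A e i) →ₗ[A] Corner (e i) (hidem i) :=
      { toFun := fun x => cornEl (hidem i) x.1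
        map_add' := fun x y => Subtype.ext <| by
          change e i * (x.1 + y.1) * e i = e i * x.1 * e i + e i * y.1 * e i
          rw [mul_add, add_mul]
        map_smul' := fun a x => Subtype.ext (hdir.corner_mul hidem hsum i a x.1) }
    have hker : Submodule.comap (stdIdeal A e i).subtype (stdTrace A e i) = LinearMap.ker ψ := by
      ext x
      have hx := (mem_stdIdeal_iff hidem i x.1).1 x.2
      have hψ : ψ x = 0 ↔ e i * x.1 * e i = 0 := Subtype.ext_iff
      rw [Submodule.mem_comap, Submodule.subtype_apply, htr, LinearMap.mem_ker, hψ, mul_assoc, hx]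
      exact and_iff_right rfl
    have hsurj : Function.Surjective ψ := fun m =>
      ⟨⟨m.1, (mem_stdIdeal_iff hidem i m.1).2 m.2.2⟩,
        Subtype.ext (show e i * m.1 * e i = m.1 by rw [m.2.1, m.2.2])⟩
    let φ : StdMod A e i ≃ₗ[A] Corner (e i) (hidem i) :=
      (Submodule.quotEquivOfEq _ _ hker).trans (ψ.quotKerEquivOfSurjective hsurj)
    exact ⟨φ.toAddEquiv, fun a m => φ.map_smul a m⟩
end

section
/- Suppose A is directed, i.e. e_j A e_i = 0 whenever j < i. Then the following are equivalent: (a) the left regular module A admits a chain of submodules 0 = M_0 ⊆ M_1 ⊆ ⋯ ⊆ M_r = A in which each successive quotient M_t/M_{t−1} is isomorphic to a direct summand of some standard module Δ_i (i.e. A is standardly stratified with respect to the index order); (b) for all i, j ∈ {1,…,n}, the space e_j A e_i is a projective left e_jAe_j-module. -/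
/-!
Write `R_j = e_jAe_j`. Directedness makes `Δ_i` concentrated at the vertex `i`: `e_jΔ_i = 0` for
`j ≠ i`, and `e_iΔ_i` is the regular `R_i`-module (`cornerMod_stdMod_projective`).

From a filtration to projectivity: `M ↦ e_jM` is exact, so a filtration of `A` by summands of
standard modules gives a filtration of `e_jA` by projective `R_j`-modules. Hence `e_jA` is
projective, and so is its direct summand `e_jAe_i` (`projective_of_filtration`).

From projectivity to a filtration: the `R_m`-module `e_mAe_i` is projective of finite length. By a
Krull–Schmidt argument it is a direct sum of indecomposable projectives, and each of these is a
direct summand of `R_m` because its endomorphism ring is local. This gives a chain of submodules `W`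
of `e_mAe_i` whose successive quotients are summands of `R_m` (`summandChain_of_projective`).
By directedness the conditions `e_j x = 0` for `j < m`, `e_m x e_l = 0` for `l < i`,
`e_m x e_i ∈ W` define a left ideal of `A` (`layer`). Enlarging `W` by one step of the chain
enlarges this ideal by a module isomorphic to a summand of `Δ_m` (`layer_step`). Letting `(m, i)`
run through all pairs in lexicographic order, these ideals connect `0` to `A`
(`filtration_of_projective`).
-/

set_option linter.unusedVariables false
set_option maxHeartbeats 1000000

section Helpers

/-! ### Direct summands and filtrations of projective modules of finite length -/

section ModuleTheory

variable {R : Type} [Ring R]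

theorem isCompl_range_ker_of_retract {X D : Type} [AddCommGroup X] [Module R X]
    [AddCommGroup D] [Module R D] (g : X →ₗ[R] D) (f : D →ₗ[R] X) (h : ∀ x, f (g x) = x) :
    IsCompl (LinearMap.range g) (LinearMap.ker f) := by
  constructor
  · rw [Submodule.disjoint_def]
    rintro _ ⟨x, rfl⟩ hx
    have hx' : f (g x) = 0 := hx
    rw [h] at hx'
    rw [hx', map_zero]
  · rw [codisjoint_iff, eq_top_iff]
    intro d _
    refine Submodule.mem_sup.2 ⟨g (f d), ⟨f d, rfl⟩, d - g (f d), ?_, by abel⟩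
    rw [LinearMap.mem_ker, map_sub, h, sub_self]

theorem exists_summand_of_retract {X D : Type} [AddCommGroup X] [Module R X]
    [AddCommGroup D] [Module R D] (g : X →ₗ[R] D) (f : D →ₗ[R] X) (h : ∀ x, f (g x) = x) :
    ∃ p q : Submodule R D, IsCompl p q ∧ Nonempty (X ≃ₗ[R] p) :=
  ⟨_, _, isCompl_range_ker_of_retract g f h,
    ⟨LinearEquiv.ofInjective g (Function.LeftInverse.injective h)⟩⟩

/-- A nonzero artinian module has an indecomposable direct summand: a minimal nonzero
summand. -/
theorem exists_indec_summand (Q : Type) [AddCommGroup Q] [Module R Q] [IsArtinian R Q]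
    [Nontrivial Q] : ∃ D D' : Submodule R Q, IsCompl D D' ∧ IsIndecModule R D := by
  obtain ⟨D, ⟨hD, D', hDD'⟩, hmin⟩ := WellFounded.has_min
    (wellFounded_lt (α := Submodule R Q)) {D | D ≠ ⊥ ∧ ∃ D', IsCompl D D'}
    ⟨⊤, top_ne_bot, ⊥, isCompl_top_bot⟩
  refine ⟨D, D', hDD', (Submodule.nontrivial_iff_ne_bot).2 hD, fun p q hpq => ?_⟩
  by_contra! hcon
  obtain ⟨hp, hq⟩ := hcon
  let g : p →ₗ[R] Q := D.subtype ∘ₗ p.subtype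
  let f : Q →ₗ[R] p := p.projectionOnto q hpq ∘ₗ D.projectionOnto D' hDD'
  have hfg : ∀ x, f (g x) = x := by
    intro x
    simp [f, g]
  have hc := isCompl_range_ker_of_retract g f hfg
  have hle : LinearMap.range g ≤ D := by
    rintro _ ⟨x, rfl⟩
    exact (x : D).2
  have hne : LinearMap.range g ≠ ⊥ := by
    intro h
    apply hp
    rw [eq_bot_iff]
    intro x hx
    have : g ⟨x, hx⟩ ∈ LinearMap.range g := ⟨_, rfl⟩
    rw [h, Submodule.mem_bot] at this
    simpa [g] using this
  have heq : LinearMap.range g = D := by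
    by_contra h
    exact hmin _ ⟨hne, _, hc⟩ (lt_of_le_of_ne hle h)
  apply hq
  rw [eq_bot_iff]
  intro y hy
  have hy' : (y : Q) ∈ LinearMap.range g := by rw [heq]; exact y.2
  obtain ⟨x, hx⟩ := hy'
  have hxy : (x : D) = y := Subtype.ext hx
  exact (Submodule.disjoint_def.1 hpq.disjoint) y (hxy ▸ x.2) hy

/-- Fitting's lemma for an indecomposable module of finite length, in the form that makes its
endomorphism ring local. -/
theorem isUnit_or_isUnit_of_indec {Q : Type} [AddCommGroup Q] [Module R Q] [IsArtinian R Q]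
    [IsNoetherian R Q] (hQ : IsIndecModule R Q) (f g : Module.End R Q) (h : IsUnit (f + g)) :
    IsUnit f ∨ IsUnit g := by
  have key : ∀ f : Module.End R Q, IsUnit f ∨ IsNilpotent f := by
    intro f
    obtain ⟨m, hm⟩ := Filter.eventually_atTop.1 (LinearMap.eventually_isCompl_ker_pow_range_pow f)
    have hc := hm (m + 1) (by omega)
    rcases hQ.2 _ _ hc with hk | hr
    · left
      have htop : LinearMap.range (f ^ (m + 1)) = ⊤ := by
        have := hc.sup_eq_top
        rwa [hk, bot_sup_eq] at this
      have hu : IsUnit (f ^ (m + 1)) :=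
        (Module.End.isUnit_iff _).2 ⟨LinearMap.ker_eq_bot.1 hk, LinearMap.range_eq_top.1 htop⟩
      exact (isUnit_pow_iff (Nat.succ_ne_zero m)).1 hu
    · right
      exact ⟨m + 1, LinearMap.range_eq_bot.1 hr⟩
  obtain ⟨u, hu⟩ := h
  rcases key (↑u⁻¹ * f) with h1 | h1
  · left
    simpa using u.isUnit.mul h1
  · right
    have h2 : (↑u⁻¹ * g : Module.End R Q) = 1 - ↑u⁻¹ * f := by
      rw [eq_sub_iff_add_eq, ← mul_add, add_comm g f, ← hu, Units.inv_mul]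
    have h3 : IsUnit (↑u⁻¹ * g : Module.End R Q) := h2 ▸ h1.isUnit_one_sub
    simpa using u.isUnit.mul h3

theorem exists_isUnit_of_isUnit_sum {Q : Type} [AddCommGroup Q] [Module R Q] [IsArtinian R Q]
    [IsNoetherian R Q] (hQ : IsIndecModule R Q) {ι : Type} (s : Finset ι)
    (f : ι → Module.End R Q) (h : IsUnit (∑ t ∈ s, f t)) : ∃ t, IsUnit (f t) := by
  classical
  induction s using Finset.induction_on with
  | empty =>
    have := hQ.1
    rw [Finset.sum_empty] at h
    exact absurd h not_isUnit_zero
  | insert a s ha ih =>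
    rw [Finset.sum_insert ha] at h
    rcases isUnit_or_isUnit_of_indec hQ _ _ h with h | h
    · exact ⟨a, h⟩
    · exact ih h

/-- An indecomposable projective module `Q` of finite length is a retract of the regular module:
writing the identity of `Q` as a sum of endomorphisms factoring through `R`, one of them is
invertible. -/
theorem exists_retract_of_indec_projective {Q : Type} [AddCommGroup Q] [Module R Q]
    [IsArtinian R Q] [IsNoetherian R Q] [Module.Projective R Q] (hQ : IsIndecModule R Q) :
    ∃ (u : Q →ₗ[R] R) (v : R →ₗ[R] Q), ∀ x, v (u x) = x := by
  obtain ⟨N, f, hf⟩ := Module.Finite.exists_fin' R Q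
  obtain ⟨g, hg⟩ := Module.projective_lifting_property f LinearMap.id hf
  let u : Fin N → (Q →ₗ[R] R) := fun t => LinearMap.proj t ∘ₗ g
  let v : Fin N → (R →ₗ[R] Q) := fun t => f ∘ₗ LinearMap.single R (fun _ => R) t
  have hs : ∑ t, (v t ∘ₗ u t : Module.End R Q) = 1 := by
    ext x
    have : f (∑ t, Pi.single t (g x t)) = x := by
      rw [Finset.univ_sum_single]
      exact LinearMap.congr_fun hg x
    rw [map_sum] at this
    simpa [u, v, LinearMap.sum_apply] using this
  obtain ⟨t, ht⟩ := exists_isUnit_of_isUnit_sum hQ Finset.univ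
    (fun t => (v t ∘ₗ u t : Module.End R Q)) (hs ▸ isUnit_one)
  obtain ⟨w, hw⟩ := ht
  refine ⟨u t, (↑w⁻¹ : Module.End R Q) ∘ₗ v t, fun x => ?_⟩
  have : (↑w⁻¹ * ↑w : Module.End R Q) x = x := by rw [Units.inv_mul]; rfl
  rw [hw] at this
  exact this

/-- `W ≤ W'`, and `W' / W` is a retract of the regular module `R` via the map `W' / W → R` induced
by a linear form `a` and the map `R → W' / W` sending `1` to the class of `w`. -/
def SummandStep {P : Type} [AddCommGroup P] [Module R P] (W W' : Submodule R P) : Prop :=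
  ∃ (a : P →ₗ[R] R) (w : P), W ≤ W' ∧ w ∈ W' ∧ (∀ x ∈ W, a x = 0) ∧ ∀ x ∈ W', x - a x • w ∈ W

/-- Induction step on `W`: an indecomposable summand of the projective quotient `P / W ≅ Q` is a
summand of `R`, and its preimage in `P` is the next term of the chain. -/
theorem summandChain_of_surjective {P : Type} [AddCommGroup P] [Module R P] [IsArtinian R P]
    [IsNoetherian R P] (W : Submodule R P) :
    ∀ (Q : Type) [AddCommGroup Q] [Module R Q] [Module.Projective R Q] (π : P →ₗ[R] Q),
      Function.Surjective π → LinearMap.ker π = W →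
        Relation.ReflTransGen SummandStep W (⊤ : Submodule R P) := by
  induction W using (wellFounded_gt (α := Submodule R P)).induction with
  | _ W ih =>
  intro Q _ _ _ π hπ hker
  rcases subsingleton_or_nontrivial Q with hsub | hnon
  · have : W = ⊤ := by
      rw [← hker, eq_top_iff]
      exact fun x _ => Subsingleton.elim _ _
    rw [this]
  have : IsArtinian R Q := isArtinian_of_surjective P π hπ
  have : IsNoetherian R Q := isNoetherian_of_surjective π (LinearMap.range_eq_top.2 hπ)
  obtain ⟨D, D', hDD', hD⟩ := exists_indec_summand (R := R) Q
  have : Module.Projective R D := Module.Projective.of_split D.subtype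
    (D.projectionOnto D' hDD') (by ext x; simp)
  have : Module.Projective R D' := Module.Projective.of_split D'.subtype
    (D'.projectionOnto D hDD'.symm) (by ext x; simp)
  obtain ⟨u, v, huv⟩ := exists_retract_of_indec_projective hD
  let π' : P →ₗ[R] D' := D'.projectionOnto D hDD'.symm ∘ₗ π
  have hmem : ∀ x, x ∈ LinearMap.ker π' ↔ π x ∈ D := by
    intro x
    simp [π']
  obtain ⟨w, hw⟩ := hπ (v 1)
  have hstep : SummandStep W (LinearMap.ker π') := by
    refine ⟨u ∘ₗ D.projectionOnto D' hDD' ∘ₗ π, w, ?_, ?_, ?_, ?_⟩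
    · intro x hx
      rw [← hker, LinearMap.mem_ker] at hx
      rw [hmem, hx]
      exact D.zero_mem
    · rw [hmem, hw]
      exact (v 1).2
    · intro x hx
      rw [← hker, LinearMap.mem_ker] at hx
      simp [hx]
    · intro x hx
      rw [hmem] at hx
      rw [← hker, LinearMap.mem_ker, map_sub, map_smul, hw, ← Submodule.coe_smul, ← map_smul,
        smul_eq_mul, mul_one]
      have h1 : D.projectionOnto D' hDD' (π x) = ⟨π x, hx⟩ :=
        Submodule.projectionOnto_apply_left hDD' ⟨π x, hx⟩
      simp only [LinearMap.comp_apply, h1, huv, sub_self]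
  have hlt : W < LinearMap.ker π' := by
    refine lt_of_le_of_ne hstep.choose_spec.choose_spec.1 fun h => ?_
    have := hD.1
    obtain ⟨d, hd⟩ := exists_ne (0 : D)
    obtain ⟨x, hx⟩ := hπ d
    have hxW : x ∈ W := by
      rw [h, hmem, hx]
      exact d.2
    rw [← hker, LinearMap.mem_ker, hx] at hxW
    exact hd (Subtype.ext hxW)
  refine Relation.ReflTransGen.head hstep (ih _ hlt D' π' ?_ rfl)
  exact (Submodule.projectionOnto_surjective hDD'.symm).comp hπ

/-- A projective module of finite length has a filtration whose successive quotients are direct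
summands of the regular module. -/
theorem summandChain_of_projective (P : Type) [AddCommGroup P] [Module R P] [IsArtinian R P]
    [IsNoetherian R P] [Module.Projective R P] :
    Relation.ReflTransGen SummandStep (⊥ : Submodule R P) ⊤ :=
  summandChain_of_surjective ⊥ P LinearMap.id Function.surjective_id LinearMap.ker_id

/-- An extension of a projective module by a projective module is projective. -/
theorem projective_of_extension {N M Q : Type} [AddCommGroup N] [Module R N] [AddCommGroup M]
    [Module R M] [AddCommGroup Q] [Module R Q] [Module.Projective R N] [Module.Projective R Q]
    (f : N →ₗ[R] M) (g : M →ₗ[R] Q) (hf : Function.Injective f) (hg : Function.Surjective g)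
    (hfg : ∀ x, g x = 0 ↔ x ∈ LinearMap.range f) : Module.Projective R M := by
  obtain ⟨s, hs⟩ := Module.projective_lifting_property g LinearMap.id hg
  have hs' : ∀ q, g (s q) = q := fun q => LinearMap.congr_fun hs q
  let Φ : N × Q →ₗ[R] M := f.coprod s
  have hgf : ∀ y, g (f y) = 0 := fun y => (hfg _).2 ⟨y, rfl⟩
  have hbij : Function.Bijective Φ := by
    constructor
    · rw [injective_iff_map_eq_zero]
      rintro ⟨y, q⟩ h
      have h0 : f y + s q = 0 := h
      have hq : q = 0 := by
        have := congrArg g h0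
        rwa [map_add, hgf, hs', zero_add, map_zero] at this
      subst hq
      rw [map_zero, add_zero] at h0
      rw [hf (h0.trans (map_zero f).symm)]
      rfl
    · intro x
      have : g (x - s (g x)) = 0 := by rw [map_sub, hs', sub_self]
      obtain ⟨y, hy⟩ := (hfg _).1 this
      refine ⟨(y, g x), ?_⟩
      show f y + s (g x) = x
      rw [hy]
      abel
  exact Module.Projective.of_equiv (LinearEquiv.ofBijective Φ hbij)

end ModuleTheory

/-! ### Projectivity of the corners from a filtration -/

section FiltrationToProjective

variable {A : Type} [Ring A]

/-- The map `cM → cN` induced by an `A`-linear map `M → N`. -/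
def CornerMod.mapLin {M N : Type} [AddCommGroup M] [Module A M] [AddCommGroup N] [Module A N]
    (c : A) (hc : c * c = c) (φ : M →ₗ[A] N) :
    CornerMod c hc M →ₗ[Corner c hc] CornerMod c hc N where
  toFun m := ⟨φ m.1, by rw [← map_smul, m.2]⟩
  map_add' x y := Subtype.ext (map_add φ x.1 y.1)
  map_smul' r x := Subtype.ext (map_smul φ r.1 x.1)

/-- For an idempotent `c` the functor `M ↦ cM` is exact, so projectivity of `cM` over `cAc` passes
to extensions. -/
theorem cornerMod_projective_of_extension {N M Q : Type} [AddCommGroup N] [Module A N]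
    [AddCommGroup M] [Module A M] [AddCommGroup Q] [Module A Q] (c : A) (hc : c * c = c)
    (f : N →ₗ[A] M) (g : M →ₗ[A] Q) (hf : Function.Injective f) (hg : Function.Surjective g)
    (hfg : ∀ x, g x = 0 ↔ x ∈ LinearMap.range f)
    (hN : Module.Projective (Corner c hc) (CornerMod c hc N))
    (hQ : Module.Projective (Corner c hc) (CornerMod c hc Q)) :
    Module.Projective (Corner c hc) (CornerMod c hc M) := by
  refine projective_of_extension (CornerMod.mapLin c hc f) (CornerMod.mapLin c hc g) ?_ ?_ ?_
  · intro x y h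
    exact Subtype.ext (hf (congrArg Subtype.val h))
  · intro q
    obtain ⟨m, hm⟩ := hg q.1
    refine ⟨⟨c • m, by rw [smul_smul, hc]⟩, Subtype.ext ?_⟩
    show g (c • m) = q.1
    rw [map_smul, hm, q.2]
  · intro x
    constructor
    · intro h
      have h0 : g x.1 = 0 := congrArg Subtype.val h
      obtain ⟨y, hy⟩ := (hfg _).1 h0
      refine ⟨⟨y, hf ?_⟩, Subtype.ext hy⟩
      rw [map_smul, hy, x.2]
    · rintro ⟨y, rfl⟩
      exact Subtype.ext ((hfg _).2 ⟨y.1, rfl⟩)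

theorem cornerMod_projective_of_retract {M N : Type} [AddCommGroup M] [Module A M]
    [AddCommGroup N] [Module A N] (c : A) (hc : c * c = c) (i : M →ₗ[A] N) (s : N →ₗ[A] M)
    (h : ∀ x, s (i x) = x) (hN : Module.Projective (Corner c hc) (CornerMod c hc N)) :
    Module.Projective (Corner c hc) (CornerMod c hc M) :=
  Module.Projective.of_split (CornerMod.mapLin c hc i) (CornerMod.mapLin c hc s)
    (LinearMap.ext fun x => Subtype.ext (h x.1))

variable {n : ℕ} {e : Fin n → A}

theorem mul_eq_zero_of_mem_stdTrace (hdir : IsDirectedAlgebra A e) {i : Fin n} {z : A}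
    (hz : z ∈ stdTrace A e i) : ∀ y, e i * y * z = 0 := by
  induction hz using Submodule.span_induction with
  | mem x hx =>
    obtain ⟨l, hl, b, rfl⟩ := hx
    intro y
    rw [← mul_assoc, ← mul_assoc, hdir l i hl, zero_mul, zero_mul]
  | zero => simp
  | add x y _ _ hx hy => intro w; rw [mul_add, hx, hy, add_zero]
  | smul a x _ hx => intro w; rw [smul_eq_mul, ← mul_assoc, mul_assoc (e i), hx]

theorem mul_eq_self_of_mem_stdIdeal (hidem : ∀ i, e i * e i = e i) {i : Fin n} {z : A}
    (hz : z ∈ stdIdeal A e i) : z * e i = z := by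
  obtain ⟨a, rfl⟩ := Submodule.mem_span_singleton.1 hz
  rw [smul_eq_mul, mul_assoc, hidem]

/-- The component `e_jΔ_i` vanishes for `j ≠ i` and is the regular module `e_iAe_i` for `j = i`. -/
theorem cornerMod_stdMod_projective (hidem : ∀ i, e i * e i = e i)
    (hdir : IsDirectedAlgebra A e) (i j : Fin n) :
    Module.Projective (Corner (e j) (hidem j)) (CornerMod (e j) (hidem j) (StdMod A e i)) := by
  by_cases hij : j = i
  · subst hij
    let f : StdMod A e j →+ A := (QuotientAddGroup.lift _
      ((AddMonoidHom.mulLeft (e j)).comp (stdIdeal A e j).subtype.toAddMonoidHom)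
      (by
        intro z hz
        have := mul_eq_zero_of_mem_stdTrace hdir (z := z.1) hz 1
        rwa [mul_one] at this))
    have hf : ∀ z : stdIdeal A e j, f (Submodule.Quotient.mk z) = e j * z.1 := fun z => rfl
    have hf1 : ∀ x, e j * f x = f x := by
      intro x
      obtain ⟨z, rfl⟩ := Submodule.Quotient.mk_surjective _ x
      rw [hf, ← mul_assoc, hidem]
    have hf2 : ∀ x, f x * e j = f x := by
      intro x
      obtain ⟨z, rfl⟩ := Submodule.Quotient.mk_surjective _ x
      rw [hf, mul_assoc, mul_eq_self_of_mem_stdIdeal hidem z.2]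
    let F : CornerMod (e j) (hidem j) (StdMod A e j) →ₗ[Corner (e j) (hidem j)]
        Corner (e j) (hidem j) :=
      { toFun := fun x => ⟨f x.1, hf1 _, hf2 _⟩
        map_add' := fun x y => Subtype.ext (map_add f x.1 y.1)
        map_smul' := by
          intro r x
          apply Subtype.ext
          show f (r.1 • x.1) = r.1 * f x.1
          obtain ⟨z, hz⟩ := Submodule.Quotient.mk_surjective _ x.1
          rw [← hz, ← Submodule.Quotient.mk_smul, hf, hf]
          show e j * (r.1 * z.1) = r.1 * (e j * z.1)
          rw [← mul_assoc, ← mul_assoc, r.2.1, r.2.2] }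
    have hin : ∀ r : Corner (e j) (hidem j), r.1 ∈ stdIdeal A e j := fun r =>
      Submodule.mem_span_singleton.2 ⟨r.1, r.2.2⟩
    let G : Corner (e j) (hidem j) →ₗ[Corner (e j) (hidem j)]
        CornerMod (e j) (hidem j) (StdMod A e j) :=
      { toFun := fun r => ⟨Submodule.Quotient.mk ⟨r.1, hin r⟩, by
          rw [← Submodule.Quotient.mk_smul]
          exact congrArg _ (Subtype.ext r.2.1)⟩
        map_add' := fun x y => rfl
        map_smul' := fun x y => rfl }
    refine Module.Projective.of_split F G (LinearMap.ext fun x => Subtype.ext ?_)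
    have hG : ∀ (x : StdMod A e j) (hx : f x ∈ stdIdeal A e j), e j • x = x →
        (Submodule.Quotient.mk ⟨f x, hx⟩ : StdMod A e j) = x := by
      intro x hx hfix
      obtain ⟨z, rfl⟩ := Submodule.Quotient.mk_surjective _ x
      exact hfix
    exact hG x.1 (hin (F x)) x.2
  · have hzero : ∀ x : StdMod A e i, e j • x = 0 := by
      intro x
      obtain ⟨z, rfl⟩ := Submodule.Quotient.mk_surjective _ x
      rw [← Submodule.Quotient.mk_smul, Submodule.Quotient.mk_eq_zero]
      show e j * z.1 ∈ stdTrace A e i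
      rw [← mul_eq_self_of_mem_stdIdeal hidem z.2, ← mul_assoc]
      rcases lt_or_gt_of_ne hij with h | h
      · rw [hdir i j h]
        exact Submodule.zero_mem _
      · exact Submodule.subset_span ⟨j, h, z.1, rfl⟩
    have : Subsingleton (CornerMod (e j) (hidem j) (StdMod A e i)) :=
      ⟨fun x y => Subtype.ext (by rw [← x.2, ← y.2, hzero, hzero])⟩
    infer_instance

theorem projective_of_filtration (hidem : ∀ i, e i * e i = e i)
    (hdir : IsDirectedAlgebra A e) (h : HasStdSummandFiltration A e A) (i j : Fin n) :
    Module.Projective (Corner (e j) (hidem j)) (Sandwich (e j) (e i)) := by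
  obtain ⟨r, F, hmono, h0, h1, hquot⟩ := h
  have key : ∀ t : Fin (r + 1),
      Module.Projective (Corner (e j) (hidem j)) (CornerMod (e j) (hidem j) (F t)) := by
    intro t
    induction t using Fin.induction with
    | zero =>
      have : Subsingleton (CornerMod (e j) (hidem j) (F 0)) := by
        constructor
        intro x y
        have hsub : ∀ z w : F 0, z = w := by
          rw [h0]
          exact fun z w => Subsingleton.elim z w
        exact Subtype.ext (hsub x.1 y.1)
      infer_instance
    | succ t ih =>
      obtain ⟨l, p, q, hpq, ⟨φ⟩⟩ := hquot t
      have hle : F t.castSucc ≤ F t.succ := hmono (Fin.castSucc_lt_succ).le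
      have hp : Module.Projective (Corner (e j) (hidem j)) (CornerMod (e j) (hidem j) p) :=
        cornerMod_projective_of_retract (e j) (hidem j) p.subtype (p.projectionOnto q hpq)
          (by simp) (cornerMod_stdMod_projective hidem hdir l j)
      refine cornerMod_projective_of_extension (e j) (hidem j) (Submodule.inclusion hle)
        (φ.toLinearMap ∘ₗ Submodule.mkQ _) (Submodule.inclusion_injective hle)
        (φ.surjective.comp (Submodule.mkQ_surjective _)) ?_ ih hp
      intro x
      rw [Submodule.range_inclusion]
      simp
  have htop : Module.Projective (Corner (e j) (hidem j)) (CornerMod (e j) (hidem j) A) := by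
    refine cornerMod_projective_of_retract (e j) (hidem j)
      (LinearMap.codRestrict (F (Fin.last r)) LinearMap.id ?_) (F (Fin.last r)).subtype
      (fun x => rfl) (key _)
    intro x
    rw [h1]
    exact Submodule.mem_top
  -- `e_jAe_i` is a retract of `e_jA`: include, and multiply by `e_i` on the right.
  let I : Sandwich (e j) (e i) →ₗ[Corner (e j) (hidem j)] CornerMod (e j) (hidem j) A :=
    { toFun := fun x => ⟨x.1, x.2.1⟩
      map_add' := fun x y => rfl
      map_smul' := fun x y => rfl }
  let S : CornerMod (e j) (hidem j) A →ₗ[Corner (e j) (hidem j)] Sandwich (e j) (e i) :=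
    { toFun := fun x => ⟨x.1 * e i, by
        have h : e j * x.1 = x.1 := x.2
        rw [← mul_assoc, h], by rw [mul_assoc, hidem]⟩
      map_add' := fun x y => Subtype.ext (add_mul _ _ _)
      map_smul' := fun x y => Subtype.ext (mul_assoc _ _ _) }
  exact Module.Projective.of_split I S (LinearMap.ext fun x => Subtype.ext x.2.2)

end FiltrationToProjective

/-! ### A filtration from projectivity of the corners -/

section ProjectiveToFiltration

variable {A : Type} [Ring A] {n : ℕ} {e : Fin n → A}

/-- `N ≤ N'`, and `N' / N` is isomorphic to a direct summand of a standard module. -/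
def StdStep (e : Fin n → A) (N N' : Submodule A A) : Prop :=
  N ≤ N' ∧ ∃ (i : Fin n) (p q : Submodule A (StdMod A e i)), IsCompl p q ∧
    Nonempty ((↥N' ⧸ (Submodule.comap N'.subtype N)) ≃ₗ[A] ↥p)

theorem filtration_of_stdChain (h : Relation.ReflTransGen (StdStep e) ⊥ ⊤) :
    HasStdSummandFiltration A e A := by
  have key : ∀ N, Relation.ReflTransGen (StdStep e) ⊥ N →
      ∃ (r : ℕ) (F : Fin (r + 1) → Submodule A A), F 0 = ⊥ ∧ F (Fin.last r) = N ∧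
        ∀ t : Fin r, StdStep e (F t.castSucc) (F t.succ) := by
    intro N hN
    induction hN with
    | refl => exact ⟨0, fun _ => ⊥, rfl, rfl, fun t => t.elim0⟩
    | @tail N N' _ hstep ih =>
      obtain ⟨r, F, h0, h1, hF⟩ := ih
      refine ⟨r + 1, Fin.snoc (α := fun _ => Submodule A A) F N', ?_, ?_, ?_⟩
      · rw [← Fin.castSucc_zero, Fin.snoc_castSucc (α := fun _ => Submodule A A), h0]
      · rw [Fin.snoc_last]
      · intro t
        induction t using Fin.lastCases with
        | last =>
          rw [Fin.snoc_castSucc (α := fun _ => Submodule A A), Fin.succ_last, Fin.snoc_last, h1]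
          exact hstep
        | cast t =>
          rw [Fin.snoc_castSucc (α := fun _ => Submodule A A), Fin.succ_castSucc,
            Fin.snoc_castSucc (α := fun _ => Submodule A A)]
          exact hF t
  obtain ⟨r, F, h0, h1, hF⟩ := key ⊤ h
  exact ⟨r, F, Fin.monotone_iff_le_succ.2 fun t => (hF t).1, h0, h1, fun t => (hF t).2⟩

theorem eq_sum_mul (hsum : ∑ i, e i = 1) (z : A) : z = ∑ l, e l * z := by
  rw [← Finset.sum_mul, hsum, one_mul]

/-- An element of `Ae_m` annihilated by `e_m` on the left lies in `Σ_{l>m} A e_l A e_m`. -/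
theorem mem_stdTrace_of_mul_eq_zero (hsum : ∑ i, e i = 1) (hdir : IsDirectedAlgebra A e)
    {m : Fin n} {z : A} (hz : z * e m = z) (hz0 : e m * z = 0) : z ∈ stdTrace A e m := by
  rw [eq_sum_mul hsum z]
  refine Submodule.sum_mem _ fun l _ => ?_
  rcases lt_trichotomy l m with h | h | h
  · rw [← hz, ← mul_assoc, hdir m l h]
    exact Submodule.zero_mem _
  · rw [h, hz0]
    exact Submodule.zero_mem _
  · rw [← hz, ← mul_assoc]
    exact Submodule.subset_span ⟨l, h, z, rfl⟩

/-- A criterion for `N' / N` to be a direct summand of `Δ_m`, with the retraction data given on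
elements: `α` induces `N' / N → Δ_m`, and `w` is the image of the generator under
`Δ_m → N' / N`. -/
theorem stdStep_of_retract (hidem : ∀ i, e i * e i = e i) (hsum : ∑ i, e i = 1)
    (hdir : IsDirectedAlgebra A e) {N N' : Submodule A A} (hle : N ≤ N') (m : Fin n)
    (α : A →+ A) (w : A) (hw : w ∈ N')
    (hα1 : ∀ x, e m * α x = α x) (hα2 : ∀ x, α x * e m = α x)
    (hα : ∀ y, ∀ x ∈ N', α (y * x) = e m * y * α x)
    (hαN : ∀ x ∈ N, α x = 0) (hαw : ∀ x ∈ N', x - α x * w ∈ N)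
    (hwe : e m * w = w) (hwN : ∀ l, m < l → ∀ b, e l * b * w ∈ N) : StdStep e N N' := by
  refine ⟨hle, m, ?_⟩
  have hin : ∀ x, α x ∈ stdIdeal A e m := fun x =>
    Submodule.mem_span_singleton.2 ⟨α x, hα2 x⟩
  let g₀ : N' →ₗ[A] StdMod A e m :=
    { toFun := fun x => Submodule.Quotient.mk ⟨α x.1, hin x.1⟩
      map_add' := by
        intro x y
        rw [← Submodule.Quotient.mk_add]
        exact congrArg _ (Subtype.ext (map_add α x.1 y.1))
      map_smul' := by
        intro y x
        rw [RingHom.id_apply, ← Submodule.Quotient.mk_smul, Submodule.Quotient.eq]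
        show α (y * x.1) - y * α x.1 ∈ stdTrace A e m
        apply mem_stdTrace_of_mul_eq_zero hsum hdir
        · rw [sub_mul, hα2, mul_assoc, hα2]
        · rw [mul_sub, hα1, hα y x.1 x.2, mul_assoc, sub_self] }
  let f₀ : stdIdeal A e m →ₗ[A] (↥N' ⧸ (Submodule.comap N'.subtype N)) :=
    { toFun := fun z => Submodule.Quotient.mk ⟨z.1 * w, N'.smul_mem z.1 hw⟩
      map_add' := by
        intro x y
        rw [← Submodule.Quotient.mk_add]
        exact congrArg _ (Subtype.ext (add_mul x.1 y.1 w))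
      map_smul' := by
        intro y x
        rw [RingHom.id_apply, ← Submodule.Quotient.mk_smul]
        exact congrArg _ (Subtype.ext (mul_assoc y x.1 w)) }
  let g : (↥N' ⧸ (Submodule.comap N'.subtype N)) →ₗ[A] StdMod A e m :=
    Submodule.liftQ _ g₀ (by
      intro x hx
      rw [LinearMap.mem_ker]
      show Submodule.Quotient.mk _ = _
      rw [Submodule.Quotient.mk_eq_zero]
      show α x.1 ∈ stdTrace A e m
      rw [hαN x.1 hx]
      exact Submodule.zero_mem _)
  have htr : ∀ z ∈ stdTrace A e m, z * w ∈ N := by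
    intro z hz
    induction hz using Submodule.span_induction with
    | mem x hx =>
      obtain ⟨l, hl, b, rfl⟩ := hx
      rw [mul_assoc, hwe]
      exact hwN l hl b
    | zero => rw [zero_mul]; exact N.zero_mem
    | add x y _ _ hx hy => rw [add_mul]; exact N.add_mem hx hy
    | smul a x _ hx => rw [smul_eq_mul, mul_assoc]; exact N.smul_mem a hx
  let f : StdMod A e m →ₗ[A] (↥N' ⧸ (Submodule.comap N'.subtype N)) :=
    Submodule.liftQ _ f₀ (by
      intro x hx
      rw [LinearMap.mem_ker]
      show Submodule.Quotient.mk _ = _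
      rw [Submodule.Quotient.mk_eq_zero]
      exact htr x.1 hx)
  refine exists_summand_of_retract g f fun x => ?_
  obtain ⟨z, rfl⟩ := Submodule.Quotient.mk_surjective _ x
  show Submodule.Quotient.mk _ = Submodule.Quotient.mk z
  rw [eq_comm, Submodule.Quotient.eq]
  exact hαw z.1 z.2

theorem mul_mul_eq_of_directed (hidem : ∀ i, e i * e i = e i) (hsum : ∑ i, e i = 1)
    (hdir : IsDirectedAlgebra A e) {m : Fin n} {x : A} (hx : ∀ j < m, e j * x = 0) (y : A) :
    (∀ j < m, e j * (y * x) = 0) ∧ e m * (y * x) = e m * y * e m * (e m * x) := by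
  constructor
  · intro j hj
    rw [eq_sum_mul hsum x, Finset.mul_sum, Finset.mul_sum]
    refine Finset.sum_eq_zero fun l _ => ?_
    rcases lt_or_ge j l with h | h
    · rw [← mul_assoc, ← mul_assoc, hdir l j h, zero_mul]
    · rw [hx l (lt_of_le_of_lt h hj), mul_zero, mul_zero]
  · conv_lhs => rw [eq_sum_mul hsum x, Finset.mul_sum, Finset.mul_sum]
    rw [Finset.sum_eq_single m]
    · rw [← mul_assoc, ← mul_assoc, ← mul_assoc, mul_assoc _ (e m) (e m), hidem]
    · intro l _ hl
      rcases lt_or_gt_of_ne hl with h | h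
      · rw [hx l h, mul_zero, mul_zero]
      · rw [← mul_assoc, ← mul_assoc, hdir l m h, zero_mul]
    · simp

/-- The additive map `A → cAd` sending `x` to `c * x * d`. -/
def Sandwich.mk' {c d : A} (hc : c * c = c) (hd : d * d = d) : A →+ Sandwich c d where
  toFun x := ⟨c * x * d, by rw [← mul_assoc, ← mul_assoc, hc], by rw [mul_assoc, hd]⟩
  map_zero' := Subtype.ext (by
    show c * 0 * d = 0
    rw [mul_zero, zero_mul])
  map_add' x y := Subtype.ext (by
    show c * (x + y) * d = c * x * d + c * y * d
    rw [mul_add, add_mul])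

theorem Sandwich.mk'_mul (hidem : ∀ i, e i * e i = e i) (hsum : ∑ i, e i = 1)
    (hdir : IsDirectedAlgebra A e) {m : Fin n} (i : Fin n) {x : A} (hx : ∀ j < m, e j * x = 0)
    (y : A) :
    Sandwich.mk' (hidem m) (hidem i) (y * x) =
      cornEl (hidem m) y • Sandwich.mk' (hidem m) (hidem i) x := by
  apply Subtype.ext
  show e m * (y * x) * e i = e m * y * e m * (e m * x * e i)
  rw [(mul_mul_eq_of_directed hidem hsum hdir hx y).2, mul_assoc (e m * y * e m)]

/-- The left ideal of all `x ∈ A` with `e_j x = 0` for `j < m`, `e_m x e_l = 0` for `l < i` and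
`e_m x e_i ∈ W`. For `W` running through a filtration of `e_mAe_i`, and `(m, i)` through all pairs
in lexicographic order, these ideals form a filtration of `A`. -/
def layer (hidem : ∀ i, e i * e i = e i) (hsum : ∑ i, e i = 1) (hdir : IsDirectedAlgebra A e)
    (m i : Fin n) (W : Submodule (Corner (e m) (hidem m)) (Sandwich (e m) (e i))) :
    Submodule A A where
  carrier := {x | (∀ j < m, e j * x = 0) ∧ (∀ l < i, e m * x * e l = 0) ∧
    Sandwich.mk' (hidem m) (hidem i) x ∈ W}
  zero_mem' := ⟨by simp, by simp, by rw [map_zero]; exact W.zero_mem⟩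
  add_mem' := by
    rintro x y ⟨hx1, hx2, hx3⟩ ⟨hy1, hy2, hy3⟩
    refine ⟨fun j hj => ?_, fun l hl => ?_, ?_⟩
    · rw [mul_add, hx1 j hj, hy1 j hj, add_zero]
    · rw [mul_add, add_mul, hx2 l hl, hy2 l hl, add_zero]
    · rw [map_add]
      exact W.add_mem hx3 hy3
  smul_mem' := by
    rintro y x ⟨hx1, hx2, hx3⟩
    have h := mul_mul_eq_of_directed hidem hsum hdir hx1 y
    refine ⟨h.1, fun l hl => ?_, ?_⟩
    · rw [smul_eq_mul, h.2, mul_assoc (e m * y * e m), hx2 l hl, mul_zero]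
    · rw [smul_eq_mul, Sandwich.mk'_mul hidem hsum hdir i hx1]
      exact W.smul_mem _ hx3

theorem layer_step (hidem : ∀ i, e i * e i = e i) (horth : ∀ i j, i ≠ j → e i * e j = 0)
    (hsum : ∑ i, e i = 1) (hdir : IsDirectedAlgebra A e) (m i : Fin n)
    (W W' : Submodule (Corner (e m) (hidem m)) (Sandwich (e m) (e i))) (h : SummandStep W W') :
    StdStep e (layer hidem hsum hdir m i W) (layer hidem hsum hdir m i W') := by
  obtain ⟨a, w, hle, hw, haW, haW'⟩ := h
  have hmkw : Sandwich.mk' (hidem m) (hidem i) w.1 = w :=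
    Subtype.ext (by
      show e m * w.1 * e i = w.1
      rw [w.2.1, w.2.2])
  have hw0 : ∀ j, j ≠ m → e j * w.1 = 0 := by
    intro j hj
    rw [← w.2.1, ← mul_assoc, horth j m hj, zero_mul]
  have hwl : ∀ l, l ≠ i → w.1 * e l = 0 := by
    intro l hl
    rw [← w.2.2, mul_assoc, horth i l hl.symm, mul_zero]
  have hwmem : w.1 ∈ layer hidem hsum hdir m i W' := by
    refine ⟨fun j hj => hw0 j hj.ne, fun l hl => ?_, ?_⟩
    · rw [mul_assoc, hwl l hl.ne, mul_zero]
    · rw [hmkw]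
      exact hw
  let α : A →+ A :=
    { toFun := fun x => (a (Sandwich.mk' (hidem m) (hidem i) x)).1
      map_zero' := by
        rw [map_zero, map_zero]
        rfl
      map_add' := by
        intro x y
        rw [map_add, map_add]
        rfl }
  have hlayer : layer hidem hsum hdir m i W ≤ layer hidem hsum hdir m i W' :=
    fun x hx => ⟨hx.1, hx.2.1, hle hx.2.2⟩
  have hα1 : ∀ x, e m * α x = α x := fun x => (a _).2.1
  have hα2 : ∀ x, α x * e m = α x := fun x => (a _).2.2
  refine stdStep_of_retract hidem hsum hdir hlayer m α w.1 hwmem hα1 hα2 ?_ ?_ ?_ w.2.1 ?_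
  · intro y x hx
    show (a (Sandwich.mk' (hidem m) (hidem i) (y * x))).1 = _
    rw [Sandwich.mk'_mul hidem hsum hdir i hx.1, map_smul]
    show e m * y * e m * α x = _
    rw [mul_assoc, hα1]
  · intro x hx
    show (a (Sandwich.mk' (hidem m) (hidem i) x)).1 = 0
    rw [haW _ hx.2.2]
    rfl
  · intro x hx
    refine ⟨fun j hj => ?_, fun l hl => ?_, ?_⟩
    · rw [mul_sub, hx.1 j hj, ← hα1, ← mul_assoc, ← mul_assoc, horth j m hj.ne, zero_mul,
        zero_mul, sub_zero]
    · rw [mul_sub, sub_mul, hx.2.1 l hl, mul_assoc, mul_assoc, hwl l hl.ne, mul_zero, mul_zero,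
        sub_zero]
    · have : Sandwich.mk' (hidem m) (hidem i) (x - α x * w.1) =
          Sandwich.mk' (hidem m) (hidem i) x -
            a (Sandwich.mk' (hidem m) (hidem i) x) • w := by
        rw [map_sub]
        congr 1
        apply Subtype.ext
        show e m * (α x * w.1) * e i = α x * w.1
        rw [← mul_assoc, hα1, mul_assoc, w.2.2]
      rw [this]
      exact haW' _ hx.2.2
  · intro l hl b
    have h0 : ∀ j, j ≤ m → e j * (e l * b * w.1) = 0 := by
      intro j hj
      rw [← mul_assoc, ← mul_assoc, horth j l (lt_of_le_of_lt hj hl).ne, zero_mul, zero_mul]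
    refine ⟨fun j hj => h0 j hj.le, fun t _ => by rw [h0 m le_rfl, zero_mul], ?_⟩
    have : Sandwich.mk' (hidem m) (hidem i) (e l * b * w.1) = 0 :=
      Subtype.ext (by
        show e m * (e l * b * w.1) * e i = 0
        rw [h0 m le_rfl, zero_mul])
    rw [this]
    exact W.zero_mem

/-- The underlying `k`-subspace of `A` of a submodule of `cAd`. It gives
`cAd` finite length over `cAc` when `A` is finite-dimensional. -/
def sandwichToSubspace (k : Type) [Field k] [Algebra k A] {c d : A} (hc : c * c = c)
    (W : Submodule (Corner c hc) (Sandwich c d)) : Submodule k A where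
  carrier := {x | ∃ y ∈ W, y.1 = x}
  zero_mem' := ⟨0, W.zero_mem, rfl⟩
  add_mem' := by
    rintro _ _ ⟨x, hx, rfl⟩ ⟨y, hy, rfl⟩
    exact ⟨x + y, W.add_mem hx hy, rfl⟩
  smul_mem' := by
    rintro t _ ⟨x, hx, rfl⟩
    refine ⟨(t • (1 : Corner c hc)) • x, W.smul_mem _ hx, ?_⟩
    show (t • c) * x.1 = t • x.1
    rw [smul_mul_assoc, x.2.1]

theorem sandwichToSubspace_strictMono (k : Type) [Field k] [Algebra k A] {c d : A}
    (hc : c * c = c) : StrictMono (sandwichToSubspace k (d := d) hc) := by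
  refine Monotone.strictMono_of_injective ?_ ?_
  · rintro W W' h _ ⟨x, hx, rfl⟩
    exact ⟨x, h hx, rfl⟩
  · have key : ∀ W W' : Submodule (Corner c hc) (Sandwich c d),
        sandwichToSubspace k hc W = sandwichToSubspace k hc W' → W ≤ W' := by
      intro W W' h x hx
      have : x.1 ∈ sandwichToSubspace k hc W := ⟨x, hx, rfl⟩
      rw [h] at this
      obtain ⟨y, hy, hyx⟩ := this
      exact (Subtype.ext hyx : y = x) ▸ hy
    exact fun W W' h => le_antisymm (key _ _ h) (key _ _ h.symm)

theorem sandwich_isNoetherian (k : Type) [Field k] [Algebra k A] [FiniteDimensional k A]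
    {c : A} (d : A) (hc : c * c = c) : IsNoetherian (Corner c hc) (Sandwich c d) :=
  isNoetherian_iff'.2 (sandwichToSubspace_strictMono k hc).wellFoundedGT

theorem sandwich_isArtinian (k : Type) [Field k] [Algebra k A] [FiniteDimensional k A]
    {c : A} (d : A) (hc : c * c = c) : IsArtinian (Corner c hc) (Sandwich c d) :=
  (sandwichToSubspace_strictMono k hc).wellFoundedLT

/-- The subset of all `x ∈ A` with `e_j x = 0` for `j < m` and `e_m x e_l = 0` for `l < s`. The
bounds are natural numbers so that `m = n` and `s = n` are allowed. -/
def layerBound (e : Fin n → A) (m s : ℕ) : Set A :=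
  {x | (∀ j : Fin n, j.1 < m → e j * x = 0) ∧
    ∀ j : Fin n, j.1 = m → ∀ l : Fin n, l.1 < s → e j * x * e l = 0}

theorem filtration_of_projective (k : Type) [Field k] [Algebra k A] [FiniteDimensional k A]
    (hidem : ∀ i, e i * e i = e i) (horth : ∀ i j, i ≠ j → e i * e j = 0)
    (hsum : ∑ i, e i = 1) (hdir : IsDirectedAlgebra A e)
    (hproj : ∀ i j : Fin n, Module.Projective (Corner (e j) (hidem j)) (Sandwich (e j) (e i))) :
    HasStdSummandFiltration A e A := by
  apply filtration_of_stdChain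
  have hlayer : ∀ m i : Fin n, Relation.ReflTransGen (StdStep e)
      (layer hidem hsum hdir m i ⊥) (layer hidem hsum hdir m i ⊤) := by
    intro m i
    have := sandwich_isNoetherian k (e i) (hidem m)
    have := sandwich_isArtinian k (e i) (hidem m)
    have := hproj i m
    exact Relation.ReflTransGen.lift (layer hidem hsum hdir m i)
      (layer_step hidem horth hsum hdir m i) _ _
      (summandChain_of_projective (Sandwich (e m) (e i)))
  have hbot : ∀ m i : Fin n,
      (layer hidem hsum hdir m i ⊥ : Set A) = layerBound e m.1 (i.1 + 1) := by
    intro m i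
    ext x
    constructor
    · rintro ⟨h1, h2, h3⟩
      refine ⟨h1, fun j hj l hl => ?_⟩
      obtain rfl : j = m := Fin.ext hj
      rcases Nat.lt_succ_iff_lt_or_eq.1 hl with h | h
      · exact h2 l h
      · obtain rfl : l = i := Fin.ext h
        have h3' : Sandwich.mk' (hidem j) (hidem l) x = 0 := (Submodule.mem_bot _).1 h3
        exact congrArg Subtype.val h3'
    · rintro ⟨h1, h2⟩
      refine ⟨h1, fun l hl => h2 m rfl l (Nat.lt_succ_of_lt hl), ?_⟩
      exact (Submodule.mem_bot _).2 (Subtype.ext (h2 m rfl i (Nat.lt_succ_self _)))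
  have htop : ∀ m i : Fin n,
      (layer hidem hsum hdir m i ⊤ : Set A) = layerBound e m.1 i.1 := by
    intro m i
    ext x
    constructor
    · rintro ⟨h1, h2, -⟩
      refine ⟨h1, fun j hj l hl => ?_⟩
      obtain rfl : j = m := Fin.ext hj
      exact h2 l hl
    · rintro ⟨h1, h2⟩
      exact ⟨h1, fun l hl => h2 m rfl l hl, Submodule.mem_top⟩
  -- A row `m` is exhausted once `s = n`, because `x = ∑ l, x * e l`.
  have hrow : ∀ m : ℕ, layerBound e m n = layerBound e (m + 1) 0 := by
    intro m
    ext x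
    constructor
    · rintro ⟨h1, h2⟩
      refine ⟨fun j hj => ?_, fun j _ l hl => absurd hl (Nat.not_lt_zero _)⟩
      rcases Nat.lt_succ_iff_lt_or_eq.1 hj with h | h
      · exact h1 j h
      · rw [← mul_one (e j * x), ← hsum, Finset.mul_sum]
        exact Finset.sum_eq_zero fun l _ => h2 j h l l.2
    · rintro ⟨h1, -⟩
      exact ⟨fun j hj => h1 j (Nat.lt_succ_of_lt hj), fun j hj l _ => by
        rw [h1 j (hj ▸ Nat.lt_succ_self _), zero_mul]⟩
  have hend : ∀ N : Submodule A A, (N : Set A) = layerBound e n 0 → N = ⊥ := by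
    intro N hN
    rw [eq_bot_iff]
    intro x hx
    have hx' : x ∈ layerBound e n 0 := hN ▸ hx
    rw [Submodule.mem_bot, eq_sum_mul hsum x]
    exact Finset.sum_eq_zero fun l _ => hx'.1 l l.2
  -- Descending double induction, on the row `m = n - d` and on the column `s = n - c` inside it.
  have key : ∀ d : ℕ, d ≤ n → ∀ N : Submodule A A, (N : Set A) = layerBound e (n - d) 0 →
      Relation.ReflTransGen (StdStep e) ⊥ N := by
    intro d
    induction d with
    | zero =>
      intro _ N hN
      rw [hend N hN]
    | succ d ihd =>
      intro hd
      have hm : n - (d + 1) < n := by omega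
      have hcol : ∀ c : ℕ, c ≤ n → ∀ N : Submodule A A,
          (N : Set A) = layerBound e (n - (d + 1)) (n - c) →
          Relation.ReflTransGen (StdStep e) ⊥ N := by
        intro c
        induction c with
        | zero =>
          intro _ N hN
          refine ihd (by omega) N ?_
          rw [hN, Nat.sub_zero, hrow]
          congr 1
          omega
        | succ c ihc =>
          intro hc N hN
          have hi : n - (c + 1) < n := by omega
          have hNtop : N = layer hidem hsum hdir ⟨_, hm⟩ ⟨_, hi⟩ ⊤ :=
            SetLike.coe_injective (by rw [hN, htop])
          rw [hNtop]
          refine Relation.ReflTransGen.trans (ihc (by omega) _ ?_) (hlayer ⟨_, hm⟩ ⟨_, hi⟩)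
          rw [hbot]
          congr 1
          show n - (c + 1) + 1 = n - c
          omega
      intro N hN
      refine hcol n le_rfl N ?_
      rw [hN, Nat.sub_self]
  refine key n le_rfl ⊤ ?_
  rw [Nat.sub_self]
  ext x
  simp [layerBound]

end ProjectiveToFiltration

end Helpers

/-- For a directed algebra `A`, the left regular module has a filtration whose
successive quotients are direct summands of standard modules (i.e. `A` is standardly stratified
with respect to the index order) if and only if each `e_j A e_i` is a projective left
`e_jAe_j`-module. -/
theorem statement1
    (k : Type) [Field k] (A : Type) [Ring A] [Algebra k A] [FiniteDimensional k A]
    {n : ℕ} (e : Fin n → A)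
    (hidem : ∀ i, e i * e i = e i)
    (horth : ∀ i j, i ≠ j → e i * e j = 0)
    (hsum : ∑ i, e i = 1)
    (hdir : IsDirectedAlgebra A e) :
    HasStdSummandFiltration A e A ↔
      ∀ i j : Fin n, Module.Projective (Corner (e j) (hidem j)) (Sandwich (e j) (e i)) := by
  exact ⟨fun h i j => projective_of_filtration hidem hdir h i j,
    filtration_of_projective k hidem horth hsum hdir⟩
end

section
/- The following are equivalent: (a) for every i ∈ {1,…,n}, every composition factor of the standard module Δ_i is isomorphic to the simple module S_i = Ae_i/(rad A)e_i (equivalently, e_j·Δ_i = 0 for all j ≠ i); (b) A is directed with respect to the index order, i.e. e_j A e_i = 0 whenever j < i. -/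
/-!
The condition `e_j • Δ_i = 0` says that `e_j A e_i ⊆ Σ_{l > i} A e_l A e_i`
(`forall_smul_stdMod_eq_zero_iff`).

If `A` is directed, then for `j < i` the left side vanishes, and for `j > i` it consists of
generators of the right side. Conversely, for `j < i` the claim `e_j A e_i = 0` follows by
downward induction on `i`: an element of `e_j A e_i` lies in `Σ_{l > i} e_j A e_l A e_i`, and each
`e_j A e_l` with `l > i > j` is zero by the induction hypothesis
(`mul_eq_zero_of_mem_stdTrace`).
-/

set_option linter.unusedVariables false
set_option maxHeartbeats 1000000

/-- The idempotent `e_j` annihilates `Δ_i` exactly when `e_j A e_i` lies in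
`Σ_{l > i} A e_l A e_i`. -/
theorem forall_smul_stdMod_eq_zero_iff {A : Type} [Ring A] {n : ℕ} (e : Fin n → A)
    (i j : Fin n) :
    (∀ m : StdMod A e i, e j • m = 0) ↔ ∀ a : A, e j * a * e i ∈ stdTrace A e i := by
  constructor
  · intro h a
    have hm := h (Submodule.Quotient.mk
      ⟨a * e i, Submodule.mem_span_singleton.2 ⟨a, rfl⟩⟩)
    rw [← Submodule.Quotient.mk_smul, Submodule.Quotient.mk_eq_zero, Submodule.mem_comap] at hm
    simpa [mul_assoc] using hm
  · intro h m
    obtain ⟨⟨x, hx⟩, rfl⟩ := Submodule.Quotient.mk_surjective _ m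
    obtain ⟨a, rfl⟩ := Submodule.mem_span_singleton.1 hx
    rw [← Submodule.Quotient.mk_smul, Submodule.Quotient.mk_eq_zero, Submodule.mem_comap]
    simpa [mul_assoc] using h a

theorem mul_eq_zero_of_mem_stdTrace_s2 {A : Type} [Ring A] {n : ℕ} (e : Fin n → A) (i j : Fin n)
    (h : ∀ l, i < l → ∀ a : A, e j * a * e l = 0) {x : A} (hx : x ∈ stdTrace A e i) :
    e j * x = 0 := by
  -- The factor `c` makes the property stable under left multiplication.
  suffices H : ∀ c : A, e j * c * x = 0 by simpa using H 1
  induction hx using Submodule.span_induction with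
  | mem x hx =>
    obtain ⟨l, hl, b, rfl⟩ := hx
    intro c
    rw [← mul_assoc, ← mul_assoc, h l hl c, zero_mul, zero_mul]
  | zero => simp
  | add x y _ _ hx hy => intro c; rw [mul_add, hx, hy, add_zero]
  | smul a x _ hx => intro c; rw [smul_eq_mul, ← mul_assoc, mul_assoc (e j), hx]

/-- For a basic finite-dimensional algebra `A` with a complete set of pairwise
orthogonal primitive idempotents: every composition factor of each standard module `Δ_i` is
isomorphic to `S_i` (equivalently, `e_j • Δ_i = 0` for all `j ≠ i`) if and only if `A` is
directed with respect to the index order. -/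
theorem statement2
    (k : Type) [Field k] [IsAlgClosed k]
    (A : Type) [Ring A] [Algebra k A] [FiniteDimensional k A]
    {n : ℕ} (e : Fin n → A)
    (hidem : ∀ i, e i * e i = e i)
    (horth : ∀ i j, i ≠ j → e i * e j = 0)
    (hsum : ∑ i, e i = 1)
    (hprim : ∀ i, IsIndecModule A ↥(stdIdeal A e i))
    (hbasic : ∀ i j, i ≠ j → IsEmpty (↥(stdIdeal A e i) ≃ₗ[A] ↥(stdIdeal A e j))) :
    (∀ (i j : Fin n), j ≠ i → ∀ m : StdMod A e i, e j • m = 0) ↔ IsDirectedAlgebra A e := by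
  constructor
  · intro h i
    induction i using WellFoundedGT.induction with
    | ind i ih =>
      intro j hj a
      have hmem := (forall_smul_stdMod_eq_zero_iff e i j).1 (h i j hj.ne) a
      have h0 := mul_eq_zero_of_mem_stdTrace_s2 e i j
        (fun l hl => ih l hl j (hj.trans hl)) hmem
      rwa [← mul_assoc, ← mul_assoc, hidem] at h0
  · intro h i j hj
    refine (forall_smul_stdMod_eq_zero_iff e i j).2 fun a => ?_
    rcases lt_or_gt_of_ne hj with hlt | hgt
    · rw [h i j hlt a]
      exact zero_mem _
    · exact Submodule.subset_span ⟨j, hgt, a, rfl⟩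
end

section
/- The following are equivalent: (a) for every i ∈ {1,…,n}, the proper standard module Δ̄_i := Ae_i / (Σ_{j≥i} A e_j (rad A) e_i) is a simple module (necessarily isomorphic to S_i = Ae_i/(rad A)e_i); (b) A is directed with respect to the index order, i.e. e_j A e_i = 0 whenever j < i. -/
/-!
Write `J = rad A`. The proof rests on three facts about the idempotents.

* `Ae` has simple top for a primitive idempotent `e`: an element `x ∈ Ae` outside `J` generates
  `Ae` (`mem_span_of_notMem_jacobson`, by Fitting's lemma applied to right multiplications).
* Since `A` is basic, `e_j A e_i ⊆ J` for `i ≠ j` (`mul_mul_mem_jacobson`).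
* `J` is nilpotent.

If every `Δ̄_i` is simple, then `J` annihilates it, so `J e_i = Σ_{l ≥ i} A e_l J e_i`. For `j < i`
this gives `e_j A e_i = e_j J e_i = Σ_{l ≥ i} (e_j A e_l) (J e_i)`, where again `j < l`. Hence if
`e_j A e_l ⊆ J ^ m` for all `l > j`, then also `e_j A e_l ⊆ J ^ (m + 1)` for all `l > j`, and
nilpotency makes these spaces vanish. Conversely, if `A` is directed, the terms of
`J e_i = Σ_l A e_l J e_i` with `l < i` vanish, so `Δ̄_i = A e_i / J e_i`, the simple top of `A e_i`.
-/

set_option linter.unusedVariables false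
set_option maxHeartbeats 1000000

/-! ### Primitive idempotents and the radical -/

section Helpers

variable {A : Type} [Ring A]

theorem mul_eq_self_of_mem_span {e x : A} (he : e * e = e)
    (hx : x ∈ Submodule.span A {e}) : x * e = x := by
  obtain ⟨a, rfl⟩ := Submodule.mem_span_singleton.1 hx
  rw [smul_eq_mul, mul_assoc, he]

/-- Right multiplication by `w ∈ Ae`, as an endomorphism of the left module `Ae`. -/
noncomputable def rightMulEnd (e w : A) (hw : w ∈ Submodule.span A {e}) :
    Module.End A ↥(Submodule.span A {e}) where
  toFun t := ⟨t.1 * w, Submodule.smul_mem _ t.1 hw⟩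
  map_add' s t := Subtype.ext (add_mul _ _ _)
  map_smul' a t := Subtype.ext (mul_assoc _ _ _)

theorem rightMulEnd_pow_apply {e w : A} (hw : w ∈ Submodule.span A {e}) (m : ℕ)
    (t : ↥(Submodule.span A {e})) : ((rightMulEnd e w hw ^ m) t).1 = t.1 * w ^ m := by
  induction m with
  | zero => simp
  | succ m ih =>
    rw [pow_succ', Module.End.mul_apply, pow_succ, ← mul_assoc, ← ih]
    rfl

theorem notMem_jacobson_of_idem {e : A} (he : e * e = e) (h0 : e ≠ 0) :
    e ∉ Ideal.jacobson (⊥ : Ideal A) := by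
  intro h
  obtain ⟨z, hz⟩ := Ideal.mem_jacobson_iff.1 h (-1)
  have h1 : z * -1 * e + z - 1 = 0 := by simpa using hz
  apply h0
  have h2 : (z * -1 * e + z - 1) * e = 0 := by rw [h1, zero_mul]
  have h3 : (z * -1 * e + z - 1) * e = -e := by
    simp [sub_mul, add_mul, mul_assoc, he]
  rw [h3] at h2
  exact neg_eq_zero.1 h2

theorem ne_zero_of_indec {e : A} (h : IsIndecModule A ↥(Submodule.span A {e})) : e ≠ 0 := by
  rintro rfl
  obtain ⟨x, hx⟩ := @exists_ne _ h.1 (0 : ↥(Submodule.span A {(0 : A)}))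
  apply hx
  obtain ⟨a, ha⟩ := Submodule.mem_span_singleton.1 x.2
  exact Subtype.ext (ha.symm.trans (smul_zero a))

/-- A primitive left ideal `Ae` has simple top: each element of `Ae` outside the radical
generates `Ae`. -/
theorem mem_span_of_notMem_jacobson [IsArtinianRing A] [IsNoetherianRing A] {e x : A}
    (he : e * e = e) (hind : IsIndecModule A ↥(Submodule.span A {e}))
    (hx : x ∈ Submodule.span A {e}) (hxJ : x ∉ Ideal.jacobson (⊥ : Ideal A)) :
    e ∈ Submodule.span A {x} := by
  -- `x ∉ J` provides `y` such that `y * x + 1` has no left inverse.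
  rw [Ideal.mem_jacobson_iff] at hxJ
  push Not at hxJ
  obtain ⟨y, hy⟩ := hxJ
  have hw : y * x ∈ Submodule.span A {e} := Submodule.smul_mem _ y hx
  have hee : e ∈ Submodule.span A {e} := Submodule.mem_span_singleton_self e
  obtain ⟨m, hm⟩ := Filter.eventually_atTop.1
    (rightMulEnd e (y * x) hw).eventually_isCompl_ker_pow_range_pow
  have hm' := hm (m + 1) (Nat.le_succ m)
  rcases hind.2 _ _ hm' with hb | hb
  · -- The power is injective, hence surjective by complementarity, so `e` is a multiple of `x`.
    have htop : LinearMap.range (rightMulEnd e (y * x) hw ^ (m + 1)) = ⊤ := by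
      have := hm'.sup_eq_top
      rwa [hb, bot_sup_eq] at this
    have hmem : (⟨e, hee⟩ : ↥(Submodule.span A {e})) ∈
        LinearMap.range (rightMulEnd e (y * x) hw ^ (m + 1)) := by
      rw [htop]; trivial
    obtain ⟨t, ht⟩ := hmem
    have h1 := congrArg Subtype.val ht
    rw [rightMulEnd_pow_apply] at h1
    refine Submodule.mem_span_singleton.2 ⟨t.1 * (y * x) ^ m * y, ?_⟩
    refine Eq.trans ?_ h1
    rw [smul_eq_mul, pow_succ]
    simp only [mul_assoc]
  · -- The power vanishes, so `y * x` is nilpotent and `y * x + 1` is a unit.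
    exfalso
    have hz : e * (y * x) ^ (m + 1) = 0 := by
      have h0 : (rightMulEnd e (y * x) hw ^ (m + 1)) = 0 := LinearMap.range_eq_bot.1 hb
      have h1 := rightMulEnd_pow_apply hw (m + 1) ⟨e, hee⟩
      rw [h0] at h1
      exact h1.symm
    have hnil : IsNilpotent (y * x) := by
      refine ⟨m + 2, ?_⟩
      rw [pow_succ', ← mul_eq_self_of_mem_span he hw, mul_assoc,
        mul_eq_self_of_mem_span he hw, hz, mul_zero]
    obtain ⟨z, hz⟩ := hnil.isUnit_add_one.exists_left_inv
    apply hy z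
    rw [mul_add, mul_one] at hz
    rw [Submodule.mem_bot, mul_assoc, hz, sub_self]

/-- If `Af` and `Ae` are primitive and not isomorphic, then `fAe ⊆ rad A`: an element of `fAe`
outside the radical would be invertible as a map `Af → Ae`. -/
theorem mul_mul_mem_jacobson [IsArtinianRing A] [IsNoetherianRing A] {e f : A}
    (he : e * e = e) (hf : f * f = f)
    (hinde : IsIndecModule A ↥(Submodule.span A {e}))
    (hindf : IsIndecModule A ↥(Submodule.span A {f}))
    (hiso : IsEmpty (↥(Submodule.span A {f}) ≃ₗ[A] ↥(Submodule.span A {e}))) (a : A) :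
    f * a * e ∈ Ideal.jacobson (⊥ : Ideal A) := by
  by_contra hJ
  have hxe : f * a * e ∈ Submodule.span A {e} :=
    Submodule.mem_span_singleton.2 ⟨f * a, rfl⟩
  have hfx : f * (f * a * e) = f * a * e := by rw [← mul_assoc, ← mul_assoc, hf]
  generalize hx : f * a * e = x at hJ hxe hfx
  obtain ⟨t, ht⟩ := Submodule.mem_span_singleton.1
    (mem_span_of_notMem_jacobson he hinde hxe hJ)
  rw [smul_eq_mul] at ht
  have hxe' := mul_eq_self_of_mem_span he hxe
  -- `u ∈ eAf` is a left inverse of `x ∈ fAe`.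
  obtain ⟨u, hu⟩ : ∃ u, u = e * t * f := ⟨_, rfl⟩
  have huf : u ∈ Submodule.span A {f} := Submodule.mem_span_singleton.2 ⟨e * t, hu.symm⟩
  have heu : e * u = u := by rw [hu, ← mul_assoc, ← mul_assoc, he]
  have hux : u * x = e := by rw [hu, mul_assoc, hfx, mul_assoc, ht, he]
  have huJ : u ∉ Ideal.jacobson (⊥ : Ideal A) := by
    intro h
    apply notMem_jacobson_of_idem he (ne_zero_of_indec hinde)
    rw [← hux]
    exact Ideal.mul_mem_right _ _ h
  obtain ⟨s, hs⟩ := Submodule.mem_span_singleton.1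
    (mem_span_of_notMem_jacobson hf hindf huf huJ)
  rw [smul_eq_mul] at hs
  -- `u` also has a left inverse `s`, which forces `s * e = x` and `x * u = f`.
  have hxu : x * u = f := by
    have h1 : s * e = x := by rw [← hux, ← mul_assoc, hs, hfx]
    rw [← h1, mul_assoc, heu, hs]
  refine hiso.false (LinearEquiv.ofLinearMap
    (⟨⟨fun t => ⟨t.1 * x, Submodule.smul_mem _ t.1 hxe⟩,
      fun _ _ => Subtype.ext (add_mul _ _ _)⟩, fun _ _ => Subtype.ext (mul_assoc _ _ _)⟩ :
      ↥(Submodule.span A {f}) →ₗ[A] ↥(Submodule.span A {e}))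
    (⟨⟨fun t => ⟨t.1 * u, Submodule.smul_mem _ t.1 huf⟩,
      fun _ _ => Subtype.ext (add_mul _ _ _)⟩, fun _ _ => Subtype.ext (mul_assoc _ _ _)⟩ :
      ↥(Submodule.span A {e}) →ₗ[A] ↥(Submodule.span A {f})) ?_ ?_)
  · refine LinearMap.ext fun t => Subtype.ext ?_
    show t.1 * u * x = t.1
    rw [mul_assoc, hux, mul_eq_self_of_mem_span he t.2]
  · refine LinearMap.ext fun t => Subtype.ext ?_
    show t.1 * x * u = t.1
    rw [mul_assoc, hxu, mul_eq_self_of_mem_span hf t.2]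

/-! ### The submodule `Σ_{j ≥ i} A e_j (rad A) e_i` -/

variable {n : ℕ} {e : Fin n → A}

theorem properTrace_le_jacobson (i : Fin n) :
    properTrace A e i ≤ Ideal.jacobson (⊥ : Ideal A) := by
  refine Submodule.span_le.2 ?_
  rintro x ⟨j, -, r, hr, rfl⟩
  exact Ideal.mul_mem_right _ _ (Ideal.mul_mem_left _ _ hr)

/-- If `Δ̄_i` is simple, it is annihilated by the radical, so that `(rad A) e_i` is contained in
the submodule defining `Δ̄_i`. -/
theorem mul_mem_properTrace_of_simple {i : Fin n} (h : IsSimpleModule A (PStdMod A e i))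
    {r : A} (hr : r ∈ Ideal.jacobson (⊥ : Ideal A)) : r * e i ∈ properTrace A e i := by
  have hann : r ∈ Module.annihilator A (PStdMod A e i) := by
    rw [Ideal.jacobson_bot] at hr
    exact IsSemisimpleModule.jacobson_le_annihilator A _ hr
  have h0 := Module.mem_annihilator.1 hann
    (Submodule.Quotient.mk ⟨e i, Submodule.mem_span_singleton_self _⟩)
  rw [← Submodule.Quotient.mk_smul, Submodule.Quotient.mk_eq_zero] at h0
  exact h0

/-- One step of the descent: if `e_j A e_l ⊆ (rad A) ^ m` for all `l > j`, then for `i > j` the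
space `e_j A` multiplies the submodule defining `Δ̄_i` into `(rad A) ^ (m + 1)`. -/
theorem mul_mem_pow_of_mem_properTrace {i j : Fin n} (hji : j < i) {m : ℕ}
    (hm : ∀ l, j < l → ∀ a : A, e j * a * e l ∈ Ideal.jacobson (⊥ : Ideal A) ^ m)
    {x : A} (hx : x ∈ properTrace A e i) :
    ∀ c : A, e j * c * x ∈ Ideal.jacobson (⊥ : Ideal A) ^ (m + 1) := by
  induction hx using Submodule.span_induction with
  | mem x hx =>
    obtain ⟨l, hl, r, hr, rfl⟩ := hx
    intro c
    rw [show e j * c * (e l * r * e i) = e j * c * e l * (r * e i) by simp only [mul_assoc],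
      Submodule.pow_succ]
    exact Ideal.mul_mem_mul (hm l (hji.trans_le hl) c) (Ideal.mul_mem_right _ _ hr)
  | zero => simp
  | add x y _ _ hx hy =>
    intro c
    rw [mul_add]
    exact add_mem (hx c) (hy c)
  | smul a x _ hx =>
    intro c
    rw [smul_eq_mul, ← mul_assoc, mul_assoc (e j)]
    exact hx (c * a)

/-- In a directed algebra, `(rad A) e_i` is contained in the submodule defining `Δ̄_i`. -/
theorem mem_properTrace_of_directed (hsum : ∑ i, e i = 1) (hdir : IsDirectedAlgebra A e)
    {i : Fin n} {x : A} (hxe : x * e i = x) (hxJ : x ∈ Ideal.jacobson (⊥ : Ideal A)) :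
    x ∈ properTrace A e i := by
  have hx : x = ∑ j, e j * x * e i := by
    rw [← Finset.sum_mul, ← Finset.sum_mul, hsum, one_mul, hxe]
  rw [hx]
  refine Submodule.sum_mem _ fun j _ => ?_
  rcases lt_or_ge j i with hji | hij
  · rw [hdir i j hji x]
    exact Submodule.zero_mem _
  · exact Submodule.subset_span ⟨j, hij, x, hxJ, rfl⟩

end Helpers

/-- For a basic finite-dimensional algebra `A` with a complete set of pairwise
orthogonal primitive idempotents: every proper standard module
`Δ̄_i = Ae_i / (Σ_{j≥i} A e_j (rad A) e_i)` is simple if and only if `A` is directed with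
respect to the index order. -/
theorem statement3
    (k : Type) [Field k] [IsAlgClosed k]
    (A : Type) [Ring A] [Algebra k A] [FiniteDimensional k A]
    {n : ℕ} (e : Fin n → A)
    (hidem : ∀ i, e i * e i = e i)
    (horth : ∀ i j, i ≠ j → e i * e j = 0)
    (hsum : ∑ i, e i = 1)
    (hprim : ∀ i, IsIndecModule A ↥(stdIdeal A e i))
    (hbasic : ∀ i j, i ≠ j → IsEmpty (↥(stdIdeal A e i) ≃ₗ[A] ↥(stdIdeal A e j))) :
    (∀ i : Fin n, IsSimpleModule A (PStdMod A e i)) ↔ IsDirectedAlgebra A e := by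
  have : IsArtinianRing A := IsArtinianRing.of_finite k A
  have : IsNoetherianRing A := IsNoetherianRing.of_finite k A
  constructor
  · intro hsimple i₀ j hj a₀
    have key : ∀ m : ℕ, ∀ l, j < l → ∀ a : A,
        e j * a * e l ∈ Ideal.jacobson (⊥ : Ideal A) ^ m := by
      intro m
      induction m with
      | zero =>
        intro l _ a
        rw [Submodule.pow_zero, Ideal.one_eq_top]
        trivial
      | succ m ih =>
        intro l hl a
        have hJ : e j * a * e l ∈ Ideal.jacobson (⊥ : Ideal A) :=
          mul_mul_mem_jacobson (hidem l) (hidem j) (hprim l) (hprim j) (hbasic j l hl.ne) a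
        have hT := mul_mem_properTrace_of_simple (hsimple l) hJ
        have h := mul_mem_pow_of_mem_properTrace hl ih hT 1
        rw [mul_assoc _ (e l), hidem, mul_one] at h
        rwa [← mul_assoc, ← mul_assoc, hidem] at h
    obtain ⟨m, hm⟩ := IsArtinianRing.isNilpotent_jacobson_bot (R := A)
    have h := key m i₀ hj a₀
    rw [hm] at h
    exact h
  · intro hdir i
    rw [isSimpleModule_iff_isCoatom]
    have hei : e i ∈ stdIdeal A e i := Submodule.mem_span_singleton_self _
    refine ⟨fun htop => ?_, fun N hN => ?_⟩
    · have h : (⟨e i, hei⟩ : ↥(stdIdeal A e i)) ∈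
          Submodule.comap (stdIdeal A e i).subtype (properTrace A e i) := by
        rw [htop]; trivial
      exact notMem_jacobson_of_idem (hidem i) (ne_zero_of_indec (hprim i))
        (properTrace_le_jacobson i h)
    · obtain ⟨y, hyN, hy⟩ := SetLike.exists_of_lt hN
      have hyJ : y.1 ∉ Ideal.jacobson (⊥ : Ideal A) := fun h =>
        hy (mem_properTrace_of_directed hsum hdir (mul_eq_self_of_mem_span (hidem i) y.2) h)
      obtain ⟨t, ht⟩ := Submodule.mem_span_singleton.1
        (mem_span_of_notMem_jacobson (hidem i) (hprim i) y.2 hyJ)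
      refine eq_top_iff.2 fun z _ => ?_
      obtain ⟨b, hb⟩ := Submodule.mem_span_singleton.1 z.2
      have hz : z = (b * t) • y := by
        apply Subtype.ext
        rw [← hb, ← ht, smul_smul]
        rfl
      rw [hz]
      exact N.smul_mem _ hyN
end
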